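/- For each α ∈ [0,2) there exists a universal constant C* > 0 with the following property: for any N* > 0 with C*·N* ≥ 1, any λ > 0, and any smooth solution u : [0,T] × ℝ² → ℝ² of the 2D Kuramoto–Sivashinsky equation ∂ₜu + (u·∇)u = −Δ²u − λΔu that is 2π-periodic in each spatial coordinate and satisfies ∫_Ω u(t,x) dx = 0 for all t ∈ [0,T], the following holds: setting δ = ∇·u and N_α(t) = [ C*( ‖u(t)‖²_{Ḣ^{−α}} + N* ) ]^{1/(2−α)}, one has for all t ∈ [0,T], ‖u(t)‖²_{L²(Ω)} ≤ exp( λ² t + ∫₀ᵗ sup_{x ∈ Ω} max( (P_{N_α(s)} δ)(s,x), 0 ) ds ) · ‖u(0)‖²_{L²(Ω)}. -/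

import Mathlib

/-!
Let `E(t) = ‖u(t)‖²_{L²}` and `δ = ∇·u`. Testing the equation with `2u` and integrating by parts,
`E' = ∫ δ|u|² - 2‖Δu‖² - 2λ∫ u·Δu`, and `-2λ u·Δu ≤ λ²|u|² + |Δu|²` gives
`E' ≤ λ² E + ∫ δ|u|² - ‖Δu‖²` (`energy_slice`). Split `δ = P_N δ + (δ - P_N δ)`. The low modes
contribute at most `sup_Ω (P_N δ)₊ · E` (`integral_PN_le`); the point is that for `N = N_α(t)` the
high modes are absorbed by the remaining dissipation `‖Δu‖²` (`high_freq`).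

For this, `|δ̂_ℓ| ≤ |ℓ||û_ℓ|`, while the `m`-th Fourier coefficient of `|u|²` is a convolution
of `û` with itself. In `j + k = -m` the larger of `|j|, |k|` is at least `|m|/2`, so placing the
weight `|·|²` on the larger frequency and `|·|^{-α}` on the smaller one gains `|m|^{2-α}`, and
Cauchy-Schwarz bounds the coefficient by `8 |m|^{-(2-α)} ‖Δu‖ ‖u‖_{Ḣ^{-α}}` up to normalisation
(`conv_bound`, `norm_integral_sq_le`). Summing over `|ℓ| > N` with Cauchy-Schwarz once more leaves
the lattice sum `∑ |ℓ|^{-2-(2-α)}`, finite as `α < 2`, and a factor `N^{-(2-α)/2} ‖u‖_{Ḣ^{-α}}`,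
which the choice of `N_α` makes small. The exchange of sums and integrals rests on the absolute
convergence of the Fourier series of smooth periodic fields, proved here from the one-dimensional
theory (`hasSum_fc`, `hasSum_parseval`).

The rate `s ↦ sup_Ω (P_{N_α(s)} δ)₊` jumps when `N_α(s)` crosses the length of a lattice point, so
it is only measurable and bounded (`integrableOn_supPos`); Grönwall's lemma is applied in the form
`gronwall_integrable`.
-/

open Real MeasureTheory Set intervalIntegral
open scoped Real Classical

noncomputable section

/-- Partial derivative in the first spatial coordinate. -/
def pd1 (f : ℝ × ℝ → ℝ) (x : ℝ × ℝ) : ℝ := deriv (fun s => f (s, x.2)) x.1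

/-- Partial derivative in the second spatial coordinate. -/
def pd2 (f : ℝ × ℝ → ℝ) (x : ℝ × ℝ) : ℝ := deriv (fun s => f (x.1, s)) x.2

/-- Advective derivative `(v·∇)f = v¹ ∂₁f + v² ∂₂f`. -/
def adv (v : ℝ × ℝ → ℝ × ℝ) (f : ℝ × ℝ → ℝ) (x : ℝ × ℝ) : ℝ :=
  (v x).1 * pd1 f x + (v x).2 * pd2 f x

/-- Divergence `∇·v = ∂₁v¹ + ∂₂v²`. -/
def divg (v : ℝ × ℝ → ℝ × ℝ) (x : ℝ × ℝ) : ℝ :=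
  pd1 (fun y => (v y).1) x + pd2 (fun y => (v y).2) x

/-- Scalar curl `∇⊥·v = ∂₁v² − ∂₂v¹`. -/
def curl2 (v : ℝ × ℝ → ℝ × ℝ) (x : ℝ × ℝ) : ℝ :=
  pd1 (fun y => (v y).2) x - pd2 (fun y => (v y).1) x

/-- Laplacian `Δf = ∂₁²f + ∂₂²f`. -/
def lap (f : ℝ × ℝ → ℝ) : ℝ × ℝ → ℝ := fun x => pd1 (pd1 f) x + pd2 (pd2 f) x

/-- `|∇v|² = Σ_{i,j} (∂ᵢvʲ)²`. -/
def gradNormSq (v : ℝ × ℝ → ℝ × ℝ) (x : ℝ × ℝ) : ℝ :=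
  (pd1 (fun y => (v y).1) x)^2 + (pd2 (fun y => (v y).1) x)^2 +
  (pd1 (fun y => (v y).2) x)^2 + (pd2 (fun y => (v y).2) x)^2

/-- The periodic box `Ω = [0,2π]²`. -/
def Omega2 : Set (ℝ × ℝ) := Set.Icc (0:ℝ) (2*π) ×ˢ Set.Icc (0:ℝ) (2*π)

/-- `2π`-periodicity in each coordinate for a vector field. -/
def Periodic2 (f : ℝ × ℝ → ℝ × ℝ) : Prop :=
  ∀ x : ℝ × ℝ, f (x.1 + 2*π, x.2) = f x ∧ f (x.1, x.2 + 2*π) = f x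

/-- Squared `L²(Ω)` norm of a vector field. -/
def l2sq (v : ℝ × ℝ → ℝ × ℝ) : ℝ := ∫ x in Omega2, ((v x).1^2 + (v x).2^2)

/-- Squared `L²(Ω)` norm of `Δv`. -/
def l2sqLap (v : ℝ × ℝ → ℝ × ℝ) : ℝ :=
  ∫ x in Omega2, ((lap (fun y => (v y).1) x)^2 + (lap (fun y => (v y).2) x)^2)

/-- `ℓ`-th Fourier coefficient of a scalar field. -/
def fc (f : ℝ × ℝ → ℝ) (ℓ : ℤ × ℤ) : ℂ :=
  ((2*π)^2)⁻¹ • ∫ x in Omega2,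
    (f x : ℂ) * Complex.exp (-(Complex.I) * ((ℓ.1:ℂ) * (x.1:ℂ) + (ℓ.2:ℂ) * (x.2:ℂ)))

/-- `ℓ`-th Fourier coefficient of a vector field. -/
def fcVec (v : ℝ × ℝ → ℝ × ℝ) (ℓ : ℤ × ℤ) : ℂ × ℂ :=
  (fc (fun y => (v y).1) ℓ, fc (fun y => (v y).2) ℓ)

/-- `|v̂_ℓ|²`. -/
def coefAbsSq (v : ℝ × ℝ → ℝ × ℝ) (ℓ : ℤ × ℤ) : ℝ :=
  ‖fc (fun y => (v y).1) ℓ‖^2 + ‖fc (fun y => (v y).2) ℓ‖^2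

/-- Squared homogeneous Sobolev norm `‖v‖²_{Ḣ^κ} = (2π)² Σ_{ℓ≠0} |ℓ|^{2κ}|v̂_ℓ|²`. -/
def hnormSq (v : ℝ × ℝ → ℝ × ℝ) (κ : ℝ) : ℝ :=
  (2*π)^2 * ∑' ℓ : ℤ × ℤ,
    if ℓ = 0 then 0 else ((ℓ.1:ℝ)^2 + (ℓ.2:ℝ)^2) ^ κ * coefAbsSq v ℓ

/-- Homogeneous Sobolev norm `‖v‖_{Ḣ^κ}`. -/
def hnorm (v : ℝ × ℝ → ℝ × ℝ) (κ : ℝ) : ℝ := Real.sqrt (hnormSq v κ)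

/-- Projection onto Fourier modes with `|ℓ| ≤ N` (scalar fields). -/
def PN (N : ℝ) (f : ℝ × ℝ → ℝ) (x : ℝ × ℝ) : ℝ :=
  ∑' ℓ : ℤ × ℤ,
    if ((ℓ.1:ℝ)^2 + (ℓ.2:ℝ)^2) ≤ N^2 then
      (fc f ℓ * Complex.exp (Complex.I * ((ℓ.1:ℂ) * (x.1:ℂ) + (ℓ.2:ℂ) * (x.2:ℂ)))).re
    else 0

/-- Projection onto Fourier modes with `|ℓ| ≤ N` (vector fields). -/
def PNvec (N : ℝ) (v : ℝ × ℝ → ℝ × ℝ) (x : ℝ × ℝ) : ℝ × ℝ :=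
  (PN N (fun y => (v y).1) x, PN N (fun y => (v y).2) x)

/-- High-mode part `(I − P_N)v`. -/
def highN (N : ℝ) (v : ℝ × ℝ → ℝ × ℝ) (x : ℝ × ℝ) : ℝ × ℝ := v x - PNvec N v x

/-- `(v·∇)w` as a vector field. -/
def advVec (v w : ℝ × ℝ → ℝ × ℝ) (x : ℝ × ℝ) : ℝ × ℝ :=
  (adv v (fun y => (w y).1) x, adv v (fun y => (w y).2) x)

/-- Laplacian of a vector field. -/
def lapVec (v : ℝ × ℝ → ℝ × ℝ) (x : ℝ × ℝ) : ℝ × ℝ :=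
  (lap (fun y => (v y).1) x, lap (fun y => (v y).2) x)

/-- Spatial mean `(2π)⁻² ∫_Ω v`. -/
def meanOf (v : ℝ × ℝ → ℝ × ℝ) : ℝ × ℝ := ((2*π)^2)⁻¹ • ∫ x in Omega2, v x

/-- Joint smoothness in `(t,x)`. -/
def SmoothTS (u : ℝ → ℝ × ℝ → ℝ × ℝ) : Prop :=
  ∀ n : ℕ, ContDiff ℝ n (fun p : ℝ × (ℝ × ℝ) => u p.1 p.2)

/-- The 2D inviscid Burgers equation `∂ₜu + (u·∇)u = 0` on `[0,T] × ℝ²`. -/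
def IsBurgers (T : ℝ) (u : ℝ → ℝ × ℝ → ℝ × ℝ) : Prop :=
  ∀ t ∈ Set.Icc (0:ℝ) T, ∀ x : ℝ × ℝ,
    deriv (fun s => (u s x).1) t + adv (u t) (fun y => (u t y).1) x = 0 ∧
    deriv (fun s => (u s x).2) t + adv (u t) (fun y => (u t y).2) x = 0

/-- The 2D Kuramoto–Sivashinsky equation `∂ₜu + (u·∇)u = −Δ²u − λΔu` on `[0,T] × ℝ²`. -/
def IsKSE (lam T : ℝ) (u : ℝ → ℝ × ℝ → ℝ × ℝ) : Prop :=
  ∀ t ∈ Set.Icc (0:ℝ) T, ∀ x : ℝ × ℝ,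
    deriv (fun s => (u s x).1) t + adv (u t) (fun y => (u t y).1) x
      = -(lap (lap (fun y => (u t y).1)) x) - lam * lap (fun y => (u t y).1) x ∧
    deriv (fun s => (u s x).2) t + adv (u t) (fun y => (u t y).2) x
      = -(lap (lap (fun y => (u t y).2)) x) - lam * lap (fun y => (u t y).2) x

open scoped ContDiff

/-! ### Characters and integration over `Ω` -/

lemma two_pi_nonneg : (0:ℝ) ≤ 2 * π := by positivity

/-- The character `e_ℓ(x) = exp(i ℓ·x)`. -/
def ee (ℓ : ℤ × ℤ) (x : ℝ × ℝ) : ℂ :=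
  Complex.exp (Complex.I * ((ℓ.1:ℂ) * (x.1:ℂ) + (ℓ.2:ℂ) * (x.2:ℂ)))

lemma norm_ee (ℓ : ℤ × ℤ) (x : ℝ × ℝ) : ‖ee ℓ x‖ = 1 := by
  unfold ee
  rw [Complex.norm_exp]
  simp

lemma ee_add (k ℓ : ℤ × ℤ) (x : ℝ × ℝ) : ee (k + ℓ) x = ee k x * ee ℓ x := by
  unfold ee
  rw [← Complex.exp_add]
  congr 1
  push_cast [Prod.fst_add, Prod.snd_add]
  ring

lemma continuous_ee (ℓ : ℤ × ℤ) : Continuous (ee ℓ) := by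
  unfold ee
  fun_prop

lemma star_ee (ℓ : ℤ × ℤ) (x : ℝ × ℝ) : (starRingEnd ℂ) (ee ℓ x) = ee (-ℓ) x := by
  unfold ee
  rw [← Complex.exp_conj]
  congr 1
  simp
  ring

lemma fc_eq (f : ℝ × ℝ → ℝ) (ℓ : ℤ × ℤ) :
    fc f ℓ = ((2*π)^2)⁻¹ • ∫ x in Omega2, (f x : ℂ) * ee (-ℓ) x := by
  unfold fc ee
  congr 3
  ext x
  congr 2
  push_cast [Prod.fst_neg, Prod.snd_neg]
  ring

lemma integral_mul_ee (f : ℝ × ℝ → ℝ) (ℓ : ℤ × ℤ) :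
    ∫ x in Omega2, (f x : ℂ) * ee ℓ x = ((2*π)^2) • fc f (-ℓ) := by
  rw [fc_eq, neg_neg, smul_inv_smul₀]
  positivity

lemma fc_neg (f : ℝ × ℝ → ℝ) (ℓ : ℤ × ℤ) : fc f (-ℓ) = (starRingEnd ℂ) (fc f ℓ) := by
  rw [fc_eq, fc_eq, Complex.real_smul, Complex.real_smul, map_mul, Complex.conj_ofReal,
    ← integral_conj]
  simp [star_ee]

lemma isCompact_Omega2 : IsCompact Omega2 := isCompact_Icc.prod isCompact_Icc

lemma measurableSet_Omega2 : MeasurableSet Omega2 := isCompact_Omega2.measurableSet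

lemma volume_real_Omega2 : volume.real Omega2 = (2*π)^2 := by
  rw [Omega2, Measure.real, Measure.volume_eq_prod, Measure.prod_prod]
  simp [sq, pi_pos.le]

lemma integrableOn_Omega2 {E : Type*} [NormedAddCommGroup E] {F : ℝ × ℝ → E}
    (hF : Continuous F) : IntegrableOn F Omega2 :=
  hF.continuousOn.integrableOn_compact isCompact_Omega2

lemma norm_integral_Omega2_le {F : ℝ × ℝ → ℂ} {M : ℝ} (hF : ∀ x ∈ Omega2, ‖F x‖ ≤ M) :
    ‖∫ x in Omega2, F x‖ ≤ M * (2*π)^2 := by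
  rw [← volume_real_Omega2]
  exact norm_setIntegral_le_of_norm_le_const isCompact_Omega2.measure_lt_top hF

section fubini
variable {E : Type*} [NormedAddCommGroup E] [NormedSpace ℝ E]

lemma integral_Omega2 {F : ℝ × ℝ → E} (hF : Continuous F) :
    ∫ x in Omega2, F x = ∫ a in (0:ℝ)..(2*π), ∫ b in (0:ℝ)..(2*π), F (a, b) := by
  have h := two_pi_nonneg
  have hi := integrableOn_Omega2 hF
  unfold Omega2 at hi ⊢
  rw [Measure.volume_eq_prod] at hi ⊢
  rw [setIntegral_prod _ hi]
  simp only [intervalIntegral.integral_of_le h, integral_Icc_eq_integral_Ioc]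

lemma integral_Omega2' {F : ℝ × ℝ → E} (hF : Continuous F) :
    ∫ x in Omega2, F x = ∫ b in (0:ℝ)..(2*π), ∫ a in (0:ℝ)..(2*π), F (a, b) := by
  have h := two_pi_nonneg
  have hi := integrableOn_Omega2 hF
  unfold Omega2 at hi ⊢
  rw [Measure.volume_eq_prod] at hi ⊢
  rw [← setIntegral_prod_swap, setIntegral_prod (fun z => F z.swap) hi.swap]
  simp only [intervalIntegral.integral_of_le h, integral_Icc_eq_integral_Ioc, Prod.swap_prod_mk]

variable [CompleteSpace E]

lemma integral_d1_eq_zero {F F' : ℝ × ℝ → E}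
    (hd : ∀ x : ℝ × ℝ, HasDerivAt (fun s => F (s, x.2)) (F' x) x.1)
    (hc : Continuous F') (hp : ∀ x : ℝ × ℝ, F (x.1 + 2*π, x.2) = F x) :
    ∫ x in Omega2, F' x = 0 := by
  rw [integral_Omega2' hc]
  have : ∀ b : ℝ, ∫ a in (0:ℝ)..(2*π), F' (a, b) = 0 := by
    intro b
    rw [integral_eq_sub_of_hasDerivAt (f := fun s => F (s, b)) (fun a _ => hd (a, b))]
    · have := hp (0, b)
      simp only [zero_add] at this
      rw [this, sub_self]
    · exact (hc.comp (by fun_prop)).intervalIntegrable _ _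
  simp [this]

lemma integral_d2_eq_zero {F F' : ℝ × ℝ → E}
    (hd : ∀ x : ℝ × ℝ, HasDerivAt (fun s => F (x.1, s)) (F' x) x.2)
    (hc : Continuous F') (hp : ∀ x : ℝ × ℝ, F (x.1, x.2 + 2*π) = F x) :
    ∫ x in Omega2, F' x = 0 := by
  rw [integral_Omega2 hc]
  have : ∀ b : ℝ, ∫ a in (0:ℝ)..(2*π), F' (b, a) = 0 := by
    intro b
    rw [integral_eq_sub_of_hasDerivAt (f := fun s => F (b, s)) (fun a _ => hd (b, a))]
    · have := hp (b, 0)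
      simp only [zero_add] at this
      rw [this, sub_self]
    · exact (hc.comp (by fun_prop)).intervalIntegrable _ _
  simp [this]

end fubini

/-! ### Smooth periodic fields -/

/-- Smooth real fields on `ℝ²` that are `2π`-periodic in each coordinate. -/
structure Sm (f : ℝ × ℝ → ℝ) : Prop where
  smooth : ContDiff ℝ ∞ f
  per1 : ∀ x : ℝ × ℝ, f (x.1 + 2*π, x.2) = f x
  per2 : ∀ x : ℝ × ℝ, f (x.1, x.2 + 2*π) = f x

lemma hasDerivAt_pd1 {f : ℝ × ℝ → ℝ} (hf : Differentiable ℝ f) (x : ℝ × ℝ) :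
    HasDerivAt (fun s => f (s, x.2)) (pd1 f x) x.1 := by
  apply DifferentiableAt.hasDerivAt
  exact DifferentiableAt.comp x.1 (hf (x.1, x.2)) (by fun_prop)

lemma hasDerivAt_pd2 {f : ℝ × ℝ → ℝ} (hf : Differentiable ℝ f) (x : ℝ × ℝ) :
    HasDerivAt (fun s => f (x.1, s)) (pd2 f x) x.2 := by
  apply DifferentiableAt.hasDerivAt
  exact DifferentiableAt.comp x.2 (hf (x.1, x.2)) (by fun_prop)

lemma pd1_eq_fderiv {f : ℝ × ℝ → ℝ} (hf : Differentiable ℝ f) (x : ℝ × ℝ) :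
    pd1 f x = fderiv ℝ f x (1, 0) := by
  have h1 : HasDerivAt (fun s : ℝ => (s, x.2)) ((1:ℝ), (0:ℝ)) x.1 :=
    (hasDerivAt_id x.1).prodMk (hasDerivAt_const x.1 x.2)
  exact ((hf (x.1, x.2)).hasFDerivAt.comp_hasDerivAt x.1 h1).deriv

lemma pd2_eq_fderiv {f : ℝ × ℝ → ℝ} (hf : Differentiable ℝ f) (x : ℝ × ℝ) :
    pd2 f x = fderiv ℝ f x (0, 1) := by
  have h1 : HasDerivAt (fun s : ℝ => (x.1, s)) ((0:ℝ), (1:ℝ)) x.2 :=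
    (hasDerivAt_const x.2 x.1).prodMk (hasDerivAt_id x.2)
  exact ((hf (x.1, x.2)).hasFDerivAt.comp_hasDerivAt x.2 h1).deriv

namespace Sm
variable {f g : ℝ × ℝ → ℝ}

lemma diff (hf : Sm f) : Differentiable ℝ f := hf.smooth.differentiable (by simp)

lemma cont (hf : Sm f) : Continuous f := hf.smooth.continuous

lemma pd1 (hf : Sm f) : Sm (pd1 f) where
  smooth := by
    rw [funext (pd1_eq_fderiv hf.diff)]
    exact (hf.smooth.fderiv_right (m := ∞) (by simp)).clm_apply contDiff_const
  per1 x := by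
    unfold _root_.pd1
    rw [← deriv_comp_add_const]
    congr 1
    ext s
    exact hf.per1 (s, x.2)
  per2 x := by
    unfold _root_.pd1
    congr 1
    ext s
    exact hf.per2 (s, x.2)

lemma pd2 (hf : Sm f) : Sm (pd2 f) where
  smooth := by
    rw [funext (pd2_eq_fderiv hf.diff)]
    exact (hf.smooth.fderiv_right (m := ∞) (by simp)).clm_apply contDiff_const
  per1 x := by
    unfold _root_.pd2
    congr 1
    ext s
    exact hf.per1 (x.1, s)
  per2 x := by
    unfold _root_.pd2
    rw [← deriv_comp_add_const]
    congr 1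
    ext s
    exact hf.per2 (x.1, s)

lemma add (hf : Sm f) (hg : Sm g) : Sm (fun x => f x + g x) where
  smooth := hf.smooth.add hg.smooth
  per1 x := by simp only [hf.per1 x, hg.per1 x]
  per2 x := by simp only [hf.per2 x, hg.per2 x]

lemma mul (hf : Sm f) (hg : Sm g) : Sm (fun x => f x * g x) where
  smooth := hf.smooth.mul hg.smooth
  per1 x := by simp only [hf.per1 x, hg.per1 x]
  per2 x := by simp only [hf.per2 x, hg.per2 x]

lemma lap (hf : Sm f) : Sm (lap f) := hf.pd1.pd1.add hf.pd2.pd2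

end Sm

/-! ### Frequencies and lattice sums -/

/-- Euclidean square `|ℓ|²` of a frequency. -/
def qq (ℓ : ℤ × ℤ) : ℝ := (ℓ.1:ℝ)^2 + (ℓ.2:ℝ)^2

lemma qq_nonneg (ℓ : ℤ × ℤ) : 0 ≤ qq ℓ := by unfold qq; positivity

lemma qq_zero : qq 0 = 0 := by simp [qq]

lemma one_le_qq {ℓ : ℤ × ℤ} (h : ℓ ≠ 0) : 1 ≤ qq ℓ := by
  have h1 : (1:ℤ) ≤ ℓ.1^2 + ℓ.2^2 := by
    by_contra! hlt
    apply h
    have h2 : ℓ.1 = 0 := by nlinarith [sq_nonneg ℓ.1, sq_nonneg ℓ.2, sq_abs ℓ.1, Int.one_le_abs (z := ℓ.1)]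
    have h3 : ℓ.2 = 0 := by nlinarith [sq_nonneg ℓ.1, sq_nonneg ℓ.2]
    exact Prod.ext h2 h3
  unfold qq
  exact_mod_cast h1

lemma qq_neg (ℓ : ℤ × ℤ) : qq (-ℓ) = qq ℓ := by simp [qq]

lemma qq_add_le (j k : ℤ × ℤ) : qq (j + k) ≤ 2 * qq j + 2 * qq k := by
  simp only [qq, Prod.fst_add, Prod.snd_add]
  push_cast
  nlinarith [sq_nonneg ((j.1:ℝ) - k.1), sq_nonneg ((j.2:ℝ) - k.2)]

/-- In two dimensions `∑ |ℓ|^{-2s}` converges for `s > 1`. -/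
lemma summable_qq_rpow {s : ℝ} (hs : 1 < s) :
    Summable fun ℓ : ℤ × ℤ => if ℓ = 0 then 0 else qq ℓ ^ (-s) := by
  have h := EisensteinSeries.summable_one_div_norm_rpow (k := 2 * s) (by linarith)
  rw [← (finTwoArrowEquiv ℤ).symm.summable_iff] at h
  refine Summable.of_nonneg_of_le (fun ℓ => ?_) (fun ℓ => ?_) h
  · split_ifs
    · exact le_rfl
    · exact rpow_nonneg (qq_nonneg ℓ) _
  · split_ifs with h0
    · exact rpow_nonneg (norm_nonneg _) _
    · simp only [Function.comp_apply, finTwoArrowEquiv_symm_apply]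
      have hn : 0 < ‖![ℓ.1, ℓ.2]‖ := by
        rw [norm_pos_iff]
        intro h1
        apply h0
        exact Prod.ext (congrFun h1 0) (congrFun h1 1)
      have hle : ‖![ℓ.1, ℓ.2]‖ ^ 2 ≤ qq ℓ := by
        rw [EisensteinSeries.norm_eq_max_natAbs]
        have h1 : ((ℓ.1.natAbs : ℕ):ℝ) = |(ℓ.1:ℝ)| := by simp [Nat.cast_natAbs]
        have h2 : ((ℓ.2.natAbs : ℕ):ℝ) = |(ℓ.2:ℝ)| := by simp [Nat.cast_natAbs]
        unfold qq
        simp only [Matrix.cons_val_zero, Matrix.cons_val_one]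
        push_cast
        rcases max_cases (|(ℓ.1:ℝ)|) (|(ℓ.2:ℝ)|) with ⟨h, _⟩ | ⟨h, _⟩ <;>
          simp only [Nat.cast_natAbs, Int.cast_abs, h, sq_abs] <;> nlinarith [sq_nonneg (ℓ.1:ℝ), sq_nonneg (ℓ.2:ℝ)]
      rw [show -(2 * s) = 2 * (-s) by ring, rpow_mul hn.le, rpow_two]
      exact rpow_le_rpow_of_nonpos (by positivity) hle (by linarith)

/-! ### Fourier coefficients of derivatives -/

lemma hasDerivAt_ee1 (ℓ : ℤ × ℤ) (x : ℝ × ℝ) :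
    HasDerivAt (fun s => ee ℓ (s, x.2)) (Complex.I * ℓ.1 * ee ℓ x) x.1 := by
  unfold ee
  have h : HasDerivAt (fun s : ℝ => Complex.I * ((ℓ.1:ℂ) * (s:ℂ) + (ℓ.2:ℂ) * (x.2:ℂ)))
      (Complex.I * ((ℓ.1:ℂ) * 1)) x.1 :=
    (((Complex.ofRealCLM.hasDerivAt (x := x.1)).const_mul _).add_const _).const_mul _
  convert h.cexp using 1
  ring

lemma hasDerivAt_ee2 (ℓ : ℤ × ℤ) (x : ℝ × ℝ) :
    HasDerivAt (fun s => ee ℓ (x.1, s)) (Complex.I * ℓ.2 * ee ℓ x) x.2 := by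
  unfold ee
  have h : HasDerivAt (fun s : ℝ => Complex.I * ((ℓ.1:ℂ) * (x.1:ℂ) + (ℓ.2:ℂ) * (s:ℂ)))
      (Complex.I * ((ℓ.2:ℂ) * 1)) x.2 :=
    (((Complex.ofRealCLM.hasDerivAt (x := x.2)).const_mul _).const_add _).const_mul _
  convert h.cexp using 1
  ring

lemma ee_per1 (ℓ : ℤ × ℤ) (x : ℝ × ℝ) : ee ℓ (x.1 + 2*π, x.2) = ee ℓ x := by
  unfold ee
  rw [← Complex.exp_periodic.int_mul ℓ.1 (Complex.I * ((ℓ.1:ℂ) * (x.1:ℂ) + (ℓ.2:ℂ) * (x.2:ℂ)))]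
  congr 1
  push_cast
  ring

lemma ee_per2 (ℓ : ℤ × ℤ) (x : ℝ × ℝ) : ee ℓ (x.1, x.2 + 2*π) = ee ℓ x := by
  unfold ee
  rw [← Complex.exp_periodic.int_mul ℓ.2 (Complex.I * ((ℓ.1:ℂ) * (x.1:ℂ) + (ℓ.2:ℂ) * (x.2:ℂ)))]
  congr 1
  push_cast
  ring

lemma integrableOn_mul_ee {f : ℝ × ℝ → ℝ} (hf : Continuous f) (ℓ : ℤ × ℤ) :
    IntegrableOn (fun x => (f x : ℂ) * ee ℓ x) Omega2 :=
  integrableOn_Omega2 ((Complex.continuous_ofReal.comp hf).mul (continuous_ee ℓ))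

lemma fc_pd1 {f : ℝ × ℝ → ℝ} (hf : Sm f) (ℓ : ℤ × ℤ) :
    fc (pd1 f) ℓ = Complex.I * ℓ.1 * fc f ℓ := by
  have h0 := integral_d1_eq_zero (F := fun x => (f x : ℂ) * ee (-ℓ) x)
    (F' := fun x => (pd1 f x : ℂ) * ee (-ℓ) x + (f x : ℂ) * (Complex.I * (-ℓ).1 * ee (-ℓ) x))
    (fun x => (hasDerivAt_pd1 hf.diff x).ofReal_comp.mul (hasDerivAt_ee1 (-ℓ) x))
    (by
      have := hf.cont; have := hf.pd1.cont; have := continuous_ee (-ℓ)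
      fun_prop)
    (fun x => by simp only [hf.per1 x, ee_per1])
  have h1 : ∀ x, (f x : ℂ) * (Complex.I * (-ℓ).1 * ee (-ℓ) x)
      = (Complex.I * (-ℓ).1) * ((f x : ℂ) * ee (-ℓ) x) := fun x => by ring
  simp only [h1] at h0
  rw [integral_add (integrableOn_mul_ee hf.pd1.cont _)
    ((integrableOn_mul_ee hf.cont _).const_mul _), MeasureTheory.integral_const_mul] at h0
  rw [fc_eq, fc_eq, eq_neg_of_add_eq_zero_left h0]
  simp only [Complex.real_smul, Prod.fst_neg]
  push_cast
  ring

lemma fc_pd2 {f : ℝ × ℝ → ℝ} (hf : Sm f) (ℓ : ℤ × ℤ) :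
    fc (pd2 f) ℓ = Complex.I * ℓ.2 * fc f ℓ := by
  have h0 := integral_d2_eq_zero (F := fun x => (f x : ℂ) * ee (-ℓ) x)
    (F' := fun x => (pd2 f x : ℂ) * ee (-ℓ) x + (f x : ℂ) * (Complex.I * (-ℓ).2 * ee (-ℓ) x))
    (fun x => (hasDerivAt_pd2 hf.diff x).ofReal_comp.mul (hasDerivAt_ee2 (-ℓ) x))
    (by
      have := hf.cont; have := hf.pd2.cont; have := continuous_ee (-ℓ)
      fun_prop)
    (fun x => by simp only [hf.per2 x, ee_per2])
  have h1 : ∀ x, (f x : ℂ) * (Complex.I * (-ℓ).2 * ee (-ℓ) x)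
      = (Complex.I * (-ℓ).2) * ((f x : ℂ) * ee (-ℓ) x) := fun x => by ring
  simp only [h1] at h0
  rw [integral_add (integrableOn_mul_ee hf.pd2.cont _)
    ((integrableOn_mul_ee hf.cont _).const_mul _), MeasureTheory.integral_const_mul] at h0
  rw [fc_eq, fc_eq, eq_neg_of_add_eq_zero_left h0]
  simp only [Complex.real_smul, Prod.snd_neg]
  push_cast
  ring

lemma fc_add {f g : ℝ × ℝ → ℝ} (hf : Continuous f) (hg : Continuous g) (ℓ : ℤ × ℤ) :
    fc (fun x => f x + g x) ℓ = fc f ℓ + fc g ℓ := by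
  rw [fc_eq, fc_eq, fc_eq, ← smul_add, ← integral_add (integrableOn_mul_ee hf _)
    (integrableOn_mul_ee hg _)]
  congr 3
  ext x
  push_cast
  ring

lemma fc_lap {f : ℝ × ℝ → ℝ} (hf : Sm f) (ℓ : ℤ × ℤ) :
    fc (lap f) ℓ = -(qq ℓ : ℂ) * fc f ℓ := by
  unfold lap
  rw [fc_add hf.pd1.pd1.cont hf.pd2.pd2.cont, fc_pd1 hf.pd1, fc_pd1 hf, fc_pd2 hf.pd2, fc_pd2 hf]
  unfold qq
  push_cast
  linear_combination (ℓ.1^2 + ℓ.2^2) * fc f ℓ * Complex.I_sq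

lemma norm_fc_le {f : ℝ × ℝ → ℝ} {M : ℝ} (hM : ∀ x ∈ Omega2, |f x| ≤ M) (ℓ : ℤ × ℤ) :
    ‖fc f ℓ‖ ≤ M := by
  rw [fc_eq, norm_smul, norm_inv, norm_pow, Real.norm_of_nonneg two_pi_nonneg]
  have h := norm_integral_Omega2_le (F := fun x => (f x : ℂ) * ee (-ℓ) x) (M := M) (fun x hx => by
    rw [norm_mul, norm_ee, mul_one, Complex.norm_real]
    exact hM x hx)
  have h2 : 0 < (2*π)^2 := by positivity
  rw [inv_mul_le_iff₀ h2]
  linarith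

/-- Decay of Fourier coefficients: a bound on `f` and `Δ²f` gives `|f̂_ℓ| ≲ |ℓ|⁻⁴`. -/
lemma norm_fc_le_decay {f : ℝ × ℝ → ℝ} (hf : Sm f) {M : ℝ} (hM0 : ∀ x ∈ Omega2, |f x| ≤ M)
    (hM : ∀ x ∈ Omega2, |lap (lap f) x| ≤ M) (ℓ : ℤ × ℤ) :
    ‖fc f ℓ‖ ≤ M * ((if ℓ = 0 then 1 else 0) + (if ℓ = 0 then 0 else qq ℓ ^ (-2:ℝ))) := by
  split_ifs with h
  · simpa using norm_fc_le hM0 ℓ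
  · have h1 := norm_fc_le hM ℓ
    rw [fc_lap hf.lap, fc_lap hf, norm_mul, norm_mul, norm_neg, Complex.norm_real,
      Real.norm_of_nonneg (qq_nonneg ℓ)] at h1
    have h2 : 0 < qq ℓ := lt_of_lt_of_le one_pos (one_le_qq h)
    rw [zero_add, rpow_neg h2.le, rpow_two, ← div_eq_mul_inv, le_div_iff₀ (by positivity)]
    linarith

lemma summable_decay (M : ℝ) : Summable fun ℓ : ℤ × ℤ =>
    M * ((if ℓ = 0 then 1 else 0) + (if ℓ = 0 then 0 else qq ℓ ^ (-2:ℝ))) := by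
  refine Summable.mul_left _ (Summable.add ?_ (summable_qq_rpow (by norm_num)))
  exact summable_of_ne_finset_zero (s := {0}) (fun b hb => by simp at hb; simp [hb])

lemma exists_bound_Omega2 {f : ℝ × ℝ → ℝ} (hf : Continuous f) : ∃ M, ∀ x ∈ Omega2, |f x| ≤ M :=
  isCompact_Omega2.exists_bound_of_continuousOn hf.continuousOn

lemma summable_norm_fc {f : ℝ × ℝ → ℝ} (hf : Sm f) : Summable fun ℓ => ‖fc f ℓ‖ := by
  obtain ⟨M, hM⟩ := exists_bound_Omega2 hf.cont
  obtain ⟨M', hM'⟩ := exists_bound_Omega2 hf.lap.lap.cont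
  exact Summable.of_nonneg_of_le (fun _ => norm_nonneg _)
    (norm_fc_le_decay hf (M := max M M') (fun x hx => (hM x hx).trans (le_max_left _ _))
      (fun x hx => (hM' x hx).trans (le_max_right _ _))) (summable_decay _)

/-! ### Fourier inversion and Parseval -/

/-- Pointwise Fourier inversion on the circle of length `2π`, for functions on the line. -/
lemma hasSum_fourier_1d {g : ℝ → ℂ} (hg : Continuous g) (hp : ∀ x, g (x + 2*π) = g x)
    {c : ℤ → ℂ} (hc : ∀ n : ℤ, c n = (2*π)⁻¹ • ∫ x in (0:ℝ)..(2*π),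
      g x * Complex.exp (-(Complex.I * (n * x)))) (hs : Summable c) (x : ℝ) :
    HasSum (fun n : ℤ => c n * Complex.exp (Complex.I * (n * x))) (g x) := by
  have : Fact (0 < 2*π) := ⟨by positivity⟩
  have hper : Function.Periodic g (2*π) := hp
  let G : C(AddCircle (2*π), ℂ) := ⟨hper.lift, hg.quotient_lift _⟩
  have hGx : ∀ y : ℝ, G (y : AddCircle (2*π)) = g y := fun y => hper.lift_coe y
  have hpi : (π:ℂ) ≠ 0 := by exact_mod_cast pi_ne_zero
  have hco : ∀ n, fourierCoeff G n = c n := by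
    intro n
    rw [fourierCoeff_eq_intervalIntegral _ _ 0, hc, zero_add, one_div]
    congr 1
    apply intervalIntegral.integral_congr
    intro y _
    simp only [hGx, fourier_coe_apply, smul_eq_mul]
    rw [mul_comm]
    congr 2
    push_cast
    field_simp
  have := has_pointwise_sum_fourier_series_of_summable (f := G) (by
    rw [funext hco]; exact hs) (x : AddCircle (2*π))
  rw [hGx] at this
  convert this using 1
  ext n
  rw [hco, fourier_coe_apply, smul_eq_mul]
  congr 2
  push_cast
  field_simp

/-- Fourier inversion on the torus, from the one-dimensional inversion formula applied in the
second variable and then in the first; absolute summability allows the iterated sum to be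
regrouped. -/
lemma hasSum_fc {f : ℝ × ℝ → ℝ} (hf : Sm f) (x : ℝ × ℝ) :
    HasSum (fun ℓ => fc f ℓ * ee ℓ x) (f x : ℂ) := by
  have hsum : Summable (fc f) := (summable_norm_fc hf).of_norm
  have hsum2 : Summable (fun ℓ => fc f ℓ * ee ℓ x) := by
    apply Summable.of_norm
    simpa [norm_ee] using summable_norm_fc hf
  -- partial coefficients in the second variable
  let c : ℤ → ℝ → ℂ := fun n a => (2*π)⁻¹ • ∫ b in (0:ℝ)..(2*π),
      (f (a, b) : ℂ) * Complex.exp (-(Complex.I * (n * b)))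
  have hcont : ∀ n, Continuous (c n) := by
    intro n
    have := hf.cont
    refine Continuous.const_smul (c := (2*π)⁻¹) (g := fun a => ∫ b in (0:ℝ)..(2*π),
      (f (a, b) : ℂ) * Complex.exp (-(Complex.I * (n * b)))) ?_
    exact intervalIntegral.continuous_parametric_intervalIntegral_of_continuous' (by fun_prop) _ _
  have hcc : ∀ m n : ℤ, fc f (m, n) = (2*π)⁻¹ • ∫ a in (0:ℝ)..(2*π),
      c n a * Complex.exp (-(Complex.I * (m * a))) := by
    intro m n
    rw [fc_eq, integral_Omega2 (by
      have := hf.cont; have := continuous_ee (-(m,n)); fun_prop), sq, mul_inv, mul_smul]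
    congr 1
    rw [← intervalIntegral.integral_smul]
    apply intervalIntegral.integral_congr
    intro a _
    simp only [c]
    rw [smul_mul_assoc, ← intervalIntegral.integral_mul_const]
    congr 1
    apply intervalIntegral.integral_congr
    intro b _
    simp only [ee]
    rw [mul_assoc, ← Complex.exp_add]
    congr 2
    simp
    ring
  have hinner : ∀ n : ℤ, HasSum (fun m : ℤ => fc f (m, n) * Complex.exp (Complex.I * (m * x.1)))
      (c n x.1) := by
    intro n
    refine hasSum_fourier_1d (hcont n) (fun a => ?_) (fun m => hcc m n) ?_ x.1
    · simp only [c]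
      congr 1
      apply intervalIntegral.integral_congr
      intro b _
      simp only [hf.per1 (a, b)]
    · exact hsum.comp_injective (fun a b h => by simpa using h : Function.Injective (fun m : ℤ => (m, n)))
  have hsw : Summable (fun p : ℤ × ℤ => fc f (p.2, p.1) * Complex.exp (Complex.I * (p.2 * x.1))) := by
    have h1 : Summable (fun p : ℤ × ℤ => fc f (p.2, p.1)) :=
      (Equiv.prodComm ℤ ℤ).summable_iff.mpr hsum
    apply Summable.of_norm
    have h2 := h1.norm
    refine h2.congr (fun p => ?_)
    rw [norm_mul, Complex.norm_exp]
    simp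
  have hc1 : Summable (fun n => c n x.1) := (hsw.hasSum.prod_fiberwise hinner).summable
  have houter : HasSum (fun n : ℤ => c n x.1 * Complex.exp (Complex.I * (n * x.2))) (f x : ℂ) := by
    refine hasSum_fourier_1d (g := fun b => (f (x.1, b) : ℂ)) ?_ (fun b => ?_) (fun n => rfl) hc1 x.2
    · have := hf.cont
      fun_prop
    · simp only [hf.per2 (x.1, b)]
  have hsw2 : HasSum (fun p : ℤ × ℤ => fc f (p.2, p.1) * ee (p.2, p.1) x)
      (∑' ℓ, fc f ℓ * ee ℓ x) :=
    (Equiv.prodComm ℤ ℤ).hasSum_iff.mpr hsum2.hasSum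
  have h3 : HasSum (fun n : ℤ => c n x.1 * Complex.exp (Complex.I * (n * x.2)))
      (∑' ℓ, fc f ℓ * ee ℓ x) := by
    refine hsw2.prod_fiberwise (fun n => ?_)
    have e : ∀ m : ℤ, fc f (m, n) * ee (m, n) x = fc f (m, n) *
        Complex.exp (Complex.I * (m * x.1)) * Complex.exp (Complex.I * (n * x.2)) := by
      intro m
      simp only [ee]
      rw [mul_assoc, ← Complex.exp_add]
      congr 2
      ring
    simp only [e]
    exact (hinner n).mul_right (Complex.exp (Complex.I * (n * x.2)))
  rw [← h3.unique houter]
  exact hsum2.hasSum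

/-- Term-by-term integration of an absolutely convergent Fourier series against a continuous
function. -/
lemma hasSum_integral_series {c : ℤ × ℤ → ℂ} (hc : Summable fun ℓ => ‖c ℓ‖) {g : ℝ × ℝ → ℂ}
    (hg : Continuous g) :
    HasSum (fun ℓ => c ℓ * ∫ x in Omega2, ee ℓ x * g x)
      (∫ x in Omega2, (∑' ℓ, c ℓ * ee ℓ x) * g x) := by
  have h := hasSum_integral_of_summable_integral_norm (μ := volume.restrict Omega2)
    (F := fun ℓ x => c ℓ * (ee ℓ x * g x)) (fun ℓ => by
      have := continuous_ee ℓ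
      exact (integrableOn_Omega2 (F := fun x => ee ℓ x * g x) (by fun_prop)).const_mul _) (by
      simp only [norm_mul, norm_ee, one_mul, MeasureTheory.integral_const_mul]
      exact hc.mul_right _)
  simp only [MeasureTheory.integral_const_mul] at h
  have e : ∀ x, (∑' ℓ, c ℓ * ee ℓ x) * g x = ∑' ℓ, c ℓ * (ee ℓ x * g x) := by
    intro x
    rw [← tsum_mul_right]
    simp only [mul_assoc]
  simp only [e]
  exact h

lemma hasSum_integral_mul {f : ℝ × ℝ → ℝ} (hf : Sm f) {g : ℝ × ℝ → ℂ} (hg : Continuous g) :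
    HasSum (fun ℓ => fc f ℓ * ∫ x in Omega2, ee ℓ x * g x) (∫ x in Omega2, (f x : ℂ) * g x) := by
  have h := hasSum_integral_series (summable_norm_fc hf) hg
  simpa only [(hasSum_fc hf _).tsum_eq] using h

lemma hasSum_parseval {f : ℝ × ℝ → ℝ} (hf : Sm f) :
    HasSum (fun ℓ => (2*π)^2 * ‖fc f ℓ‖^2) (∫ x in Omega2, f x ^ 2) := by
  have hc := hf.cont
  have h := hasSum_integral_mul hf (g := fun x => (f x : ℂ)) (by fun_prop)
  have h2 : ∀ ℓ, fc f ℓ * ∫ x in Omega2, ee ℓ x * (f x : ℂ) = (((2*π)^2 * ‖fc f ℓ‖^2 : ℝ) : ℂ) := by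
    intro ℓ
    simp only [mul_comm (ee ℓ _)]
    rw [integral_mul_ee, fc_neg, Complex.real_smul, mul_left_comm, Complex.mul_conj,
      Complex.normSq_eq_norm_sq]
    push_cast
    ring
  simp only [h2] at h
  have h3 : ∫ x in Omega2, (f x : ℂ) * (f x : ℂ) = ((∫ x in Omega2, f x ^ 2 : ℝ) : ℂ) := by
    rw [← integral_complex_ofReal]
    congr 1
    ext x
    push_cast
    ring
  rw [h3] at h
  exact Complex.hasSum_ofReal.mp h

/-- Convolution formula for the Fourier coefficients of a square. -/
lemma hasSum_sq_mul_ee {f : ℝ × ℝ → ℝ} (hf : Sm f) (m : ℤ × ℤ) :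
    HasSum (fun j => fc f j * ((2*π)^2 • fc f (-m - j)))
      (∫ x in Omega2, ((f x ^ 2 : ℝ) : ℂ) * ee m x) := by
  have hc := hf.cont
  have he := continuous_ee m
  have h := hasSum_integral_mul hf (g := fun x => (f x : ℂ) * ee m x) (by fun_prop)
  convert h using 1
  · ext j
    rw [show -m - j = -(m + j) by abel, ← integral_mul_ee]
    congr 2
    ext x
    rw [ee_add]
    ring
  · congr 1
    ext x
    push_cast
    ring

/-! ### The convolution estimate -/

lemma tsum_cauchy_schwarz {ι : Type*} {a b : ι → ℝ} (ha : ∀ i, 0 ≤ a i) (hb : ∀ i, 0 ≤ b i)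
    (ha2 : Summable fun i => a i ^ 2) (hb2 : Summable fun i => b i ^ 2) :
    Summable (fun i => a i * b i) ∧
      ∑' i, a i * b i ≤ √(∑' i, a i ^ 2) * √(∑' i, b i ^ 2) := by
  have key : ∀ s : Finset ι, ∑ i ∈ s, a i * b i ≤ √(∑' i, a i ^ 2) * √(∑' i, b i ^ 2) := by
    intro s
    refine (Real.sum_mul_le_sqrt_mul_sqrt s a b).trans ?_
    gcongr
    · exact ha2.sum_le_tsum s (fun i _ => sq_nonneg _)
    · exact hb2.sum_le_tsum s (fun i _ => sq_nonneg _)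
  have hs : Summable (fun i => a i * b i) :=
    summable_of_sum_le (fun i => mul_nonneg (ha i) (hb i)) key
  exact ⟨hs, hs.tsum_le_of_sum_le key⟩

/-- If `m + j + k = 0` and `|j| ≤ |k|`, then `|k| ≥ |m|/2`, so the weights `|k|²` and `|j|^{-α}`
together gain a factor `|m|^{2-α}`. -/
lemma weight_bound {α : ℝ} (h0 : 0 ≤ α) (h2 : α < 2) {m j k : ℤ × ℤ} (hm : m ≠ 0)
    (hj : j ≠ 0) (hk : k ≠ 0) (hjk : j + k = -m) (hle : qq j ≤ qq k) :
    1 ≤ 4 * qq m ^ (-((2 - α) / 2)) * (qq k * qq j ^ (-(α / 2))) := by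
  have hqm := one_le_qq hm
  have hqj := one_le_qq hj
  have hqk := one_le_qq hk
  have hmk : qq m ≤ 4 * qq k := by
    have := qq_add_le j k
    rw [hjk, qq_neg] at this
    linarith
  have e1 : qq k ^ (-(α/2)) ≤ qq j ^ (-(α/2)) :=
    rpow_le_rpow_of_nonpos (by linarith) hle (by linarith)
  have e2 : (4 * qq k) ^ (-((2 - α) / 2)) ≤ qq m ^ (-((2 - α) / 2)) :=
    rpow_le_rpow_of_nonpos (by linarith) hmk (by linarith)
  have e3 : (4:ℝ) ^ (-1:ℝ) ≤ 4 ^ (-((2 - α) / 2)) :=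
    rpow_le_rpow_of_exponent_le (by norm_num) (by linarith)
  have e4 : qq k ^ (-((2 - α) / 2)) * (qq k * qq k ^ (-(α/2))) = 1 := by
    nth_rewrite 2 [← rpow_one (qq k)]
    rw [← rpow_add (by linarith), ← rpow_add (by linarith)]
    convert rpow_zero (qq k) using 2
    ring
  calc (1:ℝ) = 4 * (4 ^ (-1:ℝ) * qq k ^ (-((2 - α) / 2))) * (qq k * qq k ^ (-(α/2))) := by
        rw [rpow_neg_one]
        linear_combination -e4
    _ ≤ 4 * (4 ^ (-((2 - α) / 2)) * qq k ^ (-((2 - α) / 2))) * (qq k * qq j ^ (-(α/2))) := by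
        gcongr
    _ = 4 * (4 * qq k) ^ (-((2 - α) / 2)) * (qq k * qq j ^ (-(α/2))) := by
        rw [mul_rpow (by norm_num) (by linarith)]
    _ ≤ _ := by gcongr

/-- Convolution estimate: for `m ≠ 0`,
`∑_j w_j w_{-m-j} ≤ 8 |m|^{-(2-α)} (∑ |ℓ|⁴ w_ℓ²)^{1/2} (∑ |ℓ|^{-2α} w_ℓ²)^{1/2}`. -/
lemma conv_bound {α : ℝ} (h0 : 0 ≤ α) (h2 : α < 2) {w : ℤ × ℤ → ℝ} (hw : ∀ ℓ, 0 ≤ w ℓ)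
    (hw0 : w 0 = 0) (hA : Summable fun ℓ => (qq ℓ * w ℓ) ^ 2)
    (hB : Summable fun ℓ => if ℓ = 0 then 0 else qq ℓ ^ (-α) * w ℓ ^ 2) {m : ℤ × ℤ} (hm : m ≠ 0) :
    Summable (fun j => w j * w (-m - j)) ∧
    ∑' j, w j * w (-m - j) ≤ 8 * qq m ^ (-((2 - α) / 2)) * (√(∑' ℓ, (qq ℓ * w ℓ) ^ 2) *
      √(∑' ℓ, if ℓ = 0 then 0 else qq ℓ ^ (-α) * w ℓ ^ 2)) := by
  obtain ⟨a, ha⟩ : ∃ a : ℤ × ℤ → ℝ, ∀ ℓ, a ℓ = qq ℓ * w ℓ := ⟨_, fun _ => rfl⟩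
  obtain ⟨b, hb⟩ : ∃ b : ℤ × ℤ → ℝ, ∀ ℓ, b ℓ = if ℓ = 0 then 0 else qq ℓ ^ (-(α / 2)) * w ℓ :=
    ⟨_, fun _ => rfl⟩
  have hb2 : ∀ ℓ, b ℓ ^ 2 = if ℓ = 0 then 0 else qq ℓ ^ (-α) * w ℓ ^ 2 := by
    intro ℓ
    simp only [hb]
    split_ifs
    · simp
    · rw [mul_pow, ← rpow_natCast, ← rpow_mul (qq_nonneg ℓ)]
      congr 2
      push_cast
      ring
  have ha0 : ∀ ℓ, 0 ≤ a ℓ := fun ℓ => by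
    rw [ha]
    exact mul_nonneg (qq_nonneg ℓ) (hw ℓ)
  have hb0 : ∀ ℓ, 0 ≤ b ℓ := by
    intro ℓ
    simp only [hb]
    split_ifs
    · exact le_rfl
    · exact mul_nonneg (rpow_nonneg (qq_nonneg ℓ) _) (hw ℓ)
  simp only [← hb2, ← ha] at hA hB ⊢
  let e : ℤ × ℤ ≃ ℤ × ℤ := Equiv.subLeft (-m)
  have he : ∀ j, e j = -m - j := fun j => rfl
  have cs1 := tsum_cauchy_schwarz (a := fun j => a (-m - j)) (b := b) (fun j => ha0 _) hb0
    (e.summable_iff.mpr hA) hB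
  have cs2 := tsum_cauchy_schwarz (a := a) (b := fun j => b (-m - j)) ha0 (fun j => hb0 _)
    hA (e.summable_iff.mpr hB)
  have t1 : ∑' j, a (-m - j) ^ 2 = ∑' j, a j ^ 2 := e.tsum_eq (fun j => a j ^ 2)
  have t2 : ∑' j, b (-m - j) ^ 2 = ∑' j, b j ^ 2 := e.tsum_eq (fun j => b j ^ 2)
  rw [t1] at cs1
  rw [t2] at cs2
  have hq0 : 0 ≤ qq m ^ (-((2 - α) / 2)) := rpow_nonneg (qq_nonneg m) _
  have pw : ∀ j, w j * w (-m - j) ≤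
      4 * qq m ^ (-((2 - α) / 2)) * (a (-m - j) * b j + a j * b (-m - j)) := by
    intro j
    have hr : 0 ≤ 4 * qq m ^ (-((2 - α) / 2)) * (a (-m - j) * b j + a j * b (-m - j)) :=
      mul_nonneg (by positivity) (add_nonneg (mul_nonneg (ha0 _) (hb0 _)) (mul_nonneg (ha0 _) (hb0 _)))
    by_cases hj : j = 0
    · rw [hj, hw0, zero_mul, ← hj]; exact hr
    by_cases hk : -m - j = 0
    · rw [hk, hw0, mul_zero, ← hk]; exact hr
    generalize hkk : -m - j = k at hk hr ⊢
    have hjk : j + k = -m := by rw [← hkk]; abel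
    have hww : 0 ≤ w j * w k := mul_nonneg (hw _) (hw _)
    have p1 : 0 ≤ 4 * qq m ^ (-((2 - α) / 2)) * (a k * b j) :=
      mul_nonneg (by positivity) (mul_nonneg (ha0 _) (hb0 _))
    have p2 : 0 ≤ 4 * qq m ^ (-((2 - α) / 2)) * (a j * b k) :=
      mul_nonneg (by positivity) (mul_nonneg (ha0 _) (hb0 _))
    rw [mul_add]
    rcases le_total (qq j) (qq k) with hle | hle
    · have := mul_le_mul_of_nonneg_right (weight_bound h0 h2 hm hj hk hjk hle) hww
      have e1 : 4 * qq m ^ (-((2 - α) / 2)) * (a k * b j) =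
          4 * qq m ^ (-((2 - α) / 2)) * (qq k * qq j ^ (-(α / 2))) * (w j * w k) := by
        simp only [ha, hb, if_neg hj]; ring
      linarith
    · have := mul_le_mul_of_nonneg_right
        (weight_bound h0 h2 hm hk hj (by rw [add_comm]; exact hjk) hle) hww
      have e1 : 4 * qq m ^ (-((2 - α) / 2)) * (a j * b k) =
          4 * qq m ^ (-((2 - α) / 2)) * (qq j * qq k ^ (-(α / 2))) * (w j * w k) := by
        simp only [ha, hb, if_neg hk]; ring
      linarith
  have hsR := (cs1.1.add cs2.1).mul_left (4 * qq m ^ (-((2 - α) / 2)))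
  have hs : Summable (fun j => w j * w (-m - j)) :=
    Summable.of_nonneg_of_le (fun j => mul_nonneg (hw _) (hw _)) pw hsR
  refine ⟨hs, (hs.tsum_le_tsum pw hsR).trans ?_⟩
  rw [tsum_mul_left, cs1.1.tsum_add cs2.1]
  have : 4 * qq m ^ (-((2 - α) / 2)) * (∑' j, a (-m - j) * b j + ∑' j, a j * b (-m - j)) ≤
    4 * qq m ^ (-((2 - α) / 2)) * (√(∑' j, a j ^ 2) * √(∑' j, b j ^ 2) +
      √(∑' j, a j ^ 2) * √(∑' j, b j ^ 2)) := by
    gcongr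
    · exact cs1.2
    · exact cs2.2
  linarith

/-! ### High-frequency part of the divergence -/

/-- The lattice sum `∑_{ℓ≠0} |ℓ|^{-2-(2-α)}`, finite for `α < 2`. -/
def latS (α : ℝ) : ℝ := ∑' ℓ : ℤ × ℤ, if ℓ = 0 then 0 else qq ℓ ^ (-(1 + (2 - α) / 2))

lemma latS_nonneg (α : ℝ) : 0 ≤ latS α := by
  refine tsum_nonneg (fun ℓ => ?_)
  split_ifs
  · exact le_rfl
  · exact rpow_nonneg (qq_nonneg ℓ) _

/-- Modulus `|v̂_ℓ|` of the vector Fourier coefficient. -/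
def ww (v : ℝ × ℝ → ℝ × ℝ) (ℓ : ℤ × ℤ) : ℝ := √(coefAbsSq v ℓ)

/-- A velocity field with smooth periodic components. -/
structure SmV (v : ℝ × ℝ → ℝ × ℝ) : Prop where
  c1 : Sm (fun y => (v y).1)
  c2 : Sm (fun y => (v y).2)

section
variable {v : ℝ × ℝ → ℝ × ℝ}

lemma coefAbsSq_nonneg (v : ℝ × ℝ → ℝ × ℝ) (ℓ : ℤ × ℤ) : 0 ≤ coefAbsSq v ℓ := by
  unfold coefAbsSq; positivity

lemma ww_sq (v : ℝ × ℝ → ℝ × ℝ) (ℓ : ℤ × ℤ) : ww v ℓ ^ 2 = coefAbsSq v ℓ :=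
  sq_sqrt (coefAbsSq_nonneg v ℓ)

lemma ww_nonneg (v : ℝ × ℝ → ℝ × ℝ) (ℓ : ℤ × ℤ) : 0 ≤ ww v ℓ := sqrt_nonneg _

lemma SmV.divg (hv : SmV v) : Sm (divg v) := hv.c1.pd1.add hv.c2.pd2

lemma hasSum_lap (hv : SmV v) :
    HasSum (fun ℓ => (2*π)^2 * (qq ℓ * ww v ℓ) ^ 2) (l2sqLap v) := by
  have h := (hasSum_parseval hv.c1.lap).add (hasSum_parseval hv.c2.lap)
  have e : l2sqLap v = (∫ x in Omega2, (lap (fun y => (v y).1) x) ^ 2) +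
      ∫ x in Omega2, (lap (fun y => (v y).2) x) ^ 2 :=
    integral_add (integrableOn_Omega2 (hv.c1.lap.cont.pow 2))
      (integrableOn_Omega2 (hv.c2.lap.cont.pow 2))
  rw [e]
  refine (show (fun ℓ => (2*π)^2 * (qq ℓ * ww v ℓ) ^ 2) = _ from funext fun ℓ => ?_) ▸ h
  rw [fc_lap hv.c1, fc_lap hv.c2, norm_mul, norm_mul, norm_neg, Complex.norm_real,
    Real.norm_of_nonneg (qq_nonneg ℓ), mul_pow (qq ℓ) (ww v ℓ), ww_sq, coefAbsSq]
  ring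

lemma norm_fc_divg_le (hv : SmV v) (ℓ : ℤ × ℤ) : ‖fc (divg v) ℓ‖ ≤ √(qq ℓ) * ww v ℓ := by
  have e : fc (_root_.divg v) ℓ = Complex.I * ℓ.1 * fc (fun y => (v y).1) ℓ +
      Complex.I * ℓ.2 * fc (fun y => (v y).2) ℓ := by
    rw [← fc_pd1 hv.c1, ← fc_pd2 hv.c2, ← fc_add hv.c1.pd1.cont hv.c2.pd2.cont]
    rfl
  rw [e, ww, ← sqrt_mul (qq_nonneg ℓ)]
  refine (norm_add_le _ _).trans (le_sqrt_of_sq_le ?_)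
  simp only [norm_mul, Complex.norm_I, one_mul, Complex.norm_intCast, qq, coefAbsSq]
  rw [← sq_abs (ℓ.1:ℝ), ← sq_abs (ℓ.2:ℝ)]
  nlinarith [sq_nonneg (|(ℓ.1:ℝ)| * ‖fc (fun y => (v y).2) ℓ‖ - |(ℓ.2:ℝ)| * ‖fc (fun y => (v y).1) ℓ‖)]

/-- Summability of the series of `‖v‖²_{Ḣ²}`. -/
lemma summable_A (hv : SmV v) : Summable fun ℓ => (qq ℓ * ww v ℓ) ^ 2 := by
  have h2 : (2*π)^2 ≠ 0 := by positivity
  exact (summable_mul_left_iff h2).mp (hasSum_lap hv).summable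

/-- Summability of the series of `‖v‖²_{Ḣ^{-α}}`. -/
lemma summable_B (hv : SmV v) {α : ℝ} (h0 : 0 ≤ α) :
    Summable fun ℓ => if ℓ = 0 then 0 else qq ℓ ^ (-α) * ww v ℓ ^ 2 := by
  refine Summable.of_nonneg_of_le (fun ℓ => ?_) (fun ℓ => ?_) (summable_A hv)
  · split_ifs
    · exact le_rfl
    · exact mul_nonneg (rpow_nonneg (qq_nonneg ℓ) _) (sq_nonneg _)
  · split_ifs with h
    · positivity
    · rw [mul_pow]
      have h1 := one_le_qq h
      have h3 : qq ℓ ^ (-α) ≤ 1 := rpow_le_one_of_one_le_of_nonpos h1 (by linarith)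
      gcongr
      nlinarith

/-- Bound on the Fourier coefficients of `|v|²` by the `Ḣ²` and `Ḣ^{-α}` norms of `v`. -/
lemma norm_integral_sq_le (hv : SmV v) {α : ℝ} (h0 : 0 ≤ α) (h2 : α < 2) (hz : ww v 0 = 0)
    {m : ℤ × ℤ} (hm : m ≠ 0) :
    ‖∫ x in Omega2, ee m x * (((v x).1 ^ 2 + (v x).2 ^ 2 : ℝ) : ℂ)‖ ≤ (2*π)^2 *
      (8 * qq m ^ (-((2 - α) / 2)) * (√(∑' ℓ, (qq ℓ * ww v ℓ) ^ 2) *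
      √(∑' ℓ, if ℓ = 0 then 0 else qq ℓ ^ (-α) * ww v ℓ ^ 2))) := by
  obtain ⟨cs, cb⟩ := conv_bound h0 h2 (ww_nonneg v) hz (summable_A hv) (summable_B hv h0) hm
  have h := (hasSum_sq_mul_ee hv.c1 m).add (hasSum_sq_mul_ee hv.c2 m)
  rw [← integral_add (integrableOn_mul_ee (f := fun x => (v x).1 ^ 2) (hv.c1.cont.pow 2) m)
    (integrableOn_mul_ee (f := fun x => (v x).2 ^ 2) (hv.c2.cont.pow 2) m)] at h
  have e : ∀ x, ee m x * (((v x).1 ^ 2 + (v x).2 ^ 2 : ℝ) : ℂ) =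
      (((v x).1 ^ 2 : ℝ) : ℂ) * ee m x + (((v x).2 ^ 2 : ℝ) : ℂ) * ee m x := by
    intro x
    push_cast
    ring
  simp only [e]
  refine le_trans (h.norm_le_of_bounded (cs.mul_left ((2*π)^2)).hasSum (fun j => ?_)) ?_
  · refine (norm_add_le _ _).trans ?_
    simp only [norm_mul, norm_smul, norm_pow, Real.norm_of_nonneg two_pi_nonneg]
    have : ‖fc (fun y => (v y).1) j‖ * ‖fc (fun y => (v y).1) (-m - j)‖ +
        ‖fc (fun y => (v y).2) j‖ * ‖fc (fun y => (v y).2) (-m - j)‖ ≤ ww v j * ww v (-m - j) := by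
      rw [ww, ww, ← sqrt_mul (coefAbsSq_nonneg v j)]
      refine le_sqrt_of_sq_le ?_
      simp only [coefAbsSq]
      nlinarith [sq_nonneg (‖fc (fun y => (v y).1) j‖ * ‖fc (fun y => (v y).2) (-m - j)‖ -
        ‖fc (fun y => (v y).2) j‖ * ‖fc (fun y => (v y).1) (-m - j)‖)]
    have h3 : 0 ≤ (2*π)^2 := by positivity
    nlinarith [mul_le_mul_of_nonneg_left this h3]
  · rw [tsum_mul_left]
    gcongr

lemma PN_eq (N : ℝ) (f : ℝ × ℝ → ℝ) (x : ℝ × ℝ) :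
    PN N f x = ∑' ℓ, if qq ℓ ≤ N^2 then (fc f ℓ * ee ℓ x).re else 0 := rfl

lemma norm_PN_term_le (N : ℝ) (f : ℝ × ℝ → ℝ) (x : ℝ × ℝ) (ℓ : ℤ × ℤ) :
    ‖if qq ℓ ≤ N^2 then (fc f ℓ * ee ℓ x).re else 0‖ ≤ ‖fc f ℓ‖ := by
  split_ifs
  · refine (Complex.abs_re_le_norm _).trans ?_
    rw [norm_mul, norm_ee, mul_one]
  · simp

lemma continuous_PN (N : ℝ) {f : ℝ × ℝ → ℝ} (hf : Sm f) : Continuous (PN N f) := by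
  unfold PN
  refine continuous_tsum (fun ℓ => ?_) (summable_norm_fc hf) (fun ℓ x => norm_PN_term_le N f x ℓ)
  split_ifs <;> fun_prop

lemma abs_PN_le (N : ℝ) {f : ℝ × ℝ → ℝ} (hf : Sm f) (x : ℝ × ℝ) :
    |PN N f x| ≤ ∑' ℓ, ‖fc f ℓ‖ :=
  tsum_of_norm_bounded (summable_norm_fc hf).hasSum (fun ℓ => norm_PN_term_le N f x ℓ)

/-- Coefficients of `(I - P_N) f`. -/
def hc (N : ℝ) (f : ℝ × ℝ → ℝ) (ℓ : ℤ × ℤ) : ℂ := if qq ℓ ≤ N^2 then 0 else fc f ℓ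

lemma norm_hc_le (N : ℝ) (f : ℝ × ℝ → ℝ) (ℓ : ℤ × ℤ) : ‖hc N f ℓ‖ ≤ ‖fc f ℓ‖ := by
  unfold hc
  split_ifs <;> simp

lemma summable_hc (N : ℝ) {f : ℝ × ℝ → ℝ} (hf : Sm f) : Summable fun ℓ => ‖hc N f ℓ‖ :=
  Summable.of_nonneg_of_le (fun _ => norm_nonneg _) (norm_hc_le N f) (summable_norm_fc hf)

lemma sub_PN_eq (N : ℝ) {f : ℝ × ℝ → ℝ} (hf : Sm f) (x : ℝ × ℝ) :
    f x - PN N f x = (∑' ℓ, hc N f ℓ * ee ℓ x).re := by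
  have h1 : HasSum (fun ℓ => (fc f ℓ * ee ℓ x).re) (f x) := by
    simpa using Complex.hasSum_re (hasSum_fc hf x)
  have h2 : Summable fun ℓ => if qq ℓ ≤ N^2 then (fc f ℓ * ee ℓ x).re else 0 :=
    Summable.of_norm_bounded (summable_norm_fc hf) (fun ℓ => norm_PN_term_le N f x ℓ)
  have h3 : Summable fun ℓ => hc N f ℓ * ee ℓ x := by
    apply Summable.of_norm
    simpa [norm_ee] using summable_hc N hf
  refine (h1.sub h2.hasSum).unique ?_
  have e : ∀ ℓ, (fc f ℓ * ee ℓ x).re - (if qq ℓ ≤ N^2 then (fc f ℓ * ee ℓ x).re else 0) =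
      (hc N f ℓ * ee ℓ x).re := by
    intro ℓ
    unfold hc
    split_ifs <;> simp
  simp only [e]
  exact Complex.hasSum_re h3.hasSum

/-- The high-frequency part of the divergence is absorbed by the bilaplacian dissipation as soon
as `N^{2-α}` dominates `‖v‖²_{Ḣ^{-α}}`. -/
lemma high_freq (hv : SmV v) {α : ℝ} (h0 : 0 ≤ α) (h2 : α < 2) (hz : ww v 0 = 0) {N : ℝ}
    (hN : 0 < N) (hNB : 64 * latS α *
      (∑' ℓ, if ℓ = 0 then 0 else qq ℓ ^ (-α) * ww v ℓ ^ 2) ≤ N ^ (2 - α)) :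
    ∫ x in Omega2, (divg v x - PN N (divg v) x) * ((v x).1 ^ 2 + (v x).2 ^ 2) ≤ l2sqLap v := by
  have hc1 := hv.c1.cont
  have hc2 := hv.c2.cont
  have hgc : Continuous fun x => (((v x).1 ^ 2 + (v x).2 ^ 2 : ℝ) : ℂ) := by fun_prop
  have hs := hasSum_integral_series (summable_hc N hv.divg) hgc
  have hFc : Continuous fun x => (∑' ℓ, hc N (divg v) ℓ * ee ℓ x) := by
    refine continuous_tsum (fun ℓ => continuous_const.mul (continuous_ee ℓ))
      (summable_hc N hv.divg) (fun ℓ x => ?_)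
    rw [norm_mul, norm_ee, mul_one]
  have e : ∫ x in Omega2, (divg v x - PN N (divg v) x) * ((v x).1 ^ 2 + (v x).2 ^ 2) =
      (∫ x in Omega2, (∑' ℓ, hc N (divg v) ℓ * ee ℓ x) *
        (((v x).1 ^ 2 + (v x).2 ^ 2 : ℝ) : ℂ)).re := by
    have h := Complex.reCLM.integral_comp_comm (integrableOn_Omega2
      (F := fun x => (∑' ℓ, hc N (divg v) ℓ * ee ℓ x) *
        (((v x).1 ^ 2 + (v x).2 ^ 2 : ℝ) : ℂ)) (hFc.mul hgc))
    rw [← Complex.reCLM_apply, ← h]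
    congr 1
    ext x
    rw [Complex.reCLM_apply, Complex.re_mul_ofReal, sub_PN_eq N hv.divg]
  rw [e]
  refine (Complex.re_le_norm _).trans ?_
  obtain ⟨γ, hγ⟩ : ∃ γ, γ = (2 - α) / 2 := ⟨_, rfl⟩
  have hγ0 : 0 < γ := by rw [hγ]; linarith
  obtain ⟨A, hA⟩ : ∃ A, A = ∑' ℓ, (qq ℓ * ww v ℓ) ^ 2 := ⟨_, rfl⟩
  obtain ⟨B, hB⟩ : ∃ B, B = ∑' ℓ, if ℓ = 0 then 0 else qq ℓ ^ (-α) * ww v ℓ ^ 2 := ⟨_, rfl⟩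
  have hA0 : 0 ≤ A := by rw [hA]; exact tsum_nonneg (fun _ => sq_nonneg _)
  have hB0 : 0 ≤ B := by
    rw [hB]
    refine tsum_nonneg (fun ℓ => ?_)
    split_ifs
    · exact le_rfl
    · exact mul_nonneg (rpow_nonneg (qq_nonneg ℓ) _) (sq_nonneg _)
  have hlap : l2sqLap v = (2*π)^2 * A := by
    rw [hA, ← (hasSum_lap hv).tsum_eq, tsum_mul_left]
  -- square root of the summand of the lattice sum
  obtain ⟨σ, hσ⟩ : ∃ σ : ℤ × ℤ → ℝ, ∀ ℓ, σ ℓ = if ℓ = 0 then 0 else qq ℓ ^ (-((1 + γ) / 2)) :=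
    ⟨_, fun _ => rfl⟩
  have hσ0 : ∀ ℓ, 0 ≤ σ ℓ := by
    intro ℓ
    rw [hσ]
    split_ifs
    · exact le_rfl
    · exact rpow_nonneg (qq_nonneg ℓ) _
  have hσ2 : ∀ ℓ, σ ℓ ^ 2 = if ℓ = 0 then 0 else qq ℓ ^ (-(1 + (2 - α) / 2)) := by
    intro ℓ
    rw [hσ]
    split_ifs
    · simp
    · rw [← rpow_natCast, ← rpow_mul (qq_nonneg ℓ), ← hγ]
      congr 1
      push_cast
      ring
  have hσs : Summable fun ℓ => σ ℓ ^ 2 := by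
    simp only [hσ2]
    exact summable_qq_rpow (by linarith)
  have hS : ∑' ℓ, σ ℓ ^ 2 = latS α := by simp only [hσ2]; rfl
  obtain ⟨cs, cb⟩ := tsum_cauchy_schwarz (a := fun ℓ => qq ℓ * ww v ℓ) (b := σ)
    (fun ℓ => mul_nonneg (qq_nonneg ℓ) (ww_nonneg v ℓ)) hσ0 (summable_A hv) hσs
  rw [hS, ← hA] at cb
  refine (hs.norm_le_of_bounded (cs.mul_left ((2*π)^2 * (8 * (√A * √B) * N ^ (-γ)))).hasSum
    (fun ℓ => ?_)).trans ?_
  · have hr : 0 ≤ (2*π)^2 * (8 * (√A * √B) * N ^ (-γ)) * (qq ℓ * ww v ℓ * σ ℓ) := by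
      have := qq_nonneg ℓ; have := ww_nonneg v ℓ; have := hσ0 ℓ
      positivity
    by_cases hq : qq ℓ ≤ N^2
    · simpa [hc, hq] using hr
    have hq' : N^2 < qq ℓ := not_le.mp hq
    have hℓ : ℓ ≠ 0 := by
      rintro rfl
      rw [qq_zero] at hq'
      nlinarith
    have hq1 := one_le_qq hℓ
    have hq0 : 0 < qq ℓ := by linarith
    rw [hc, if_neg hq, norm_mul]
    have i1 := norm_integral_sq_le hv h0 h2 hz hℓ
    rw [← hA, ← hB, ← hγ] at i1
    refine (mul_le_mul (norm_fc_divg_le hv ℓ) i1 (norm_nonneg _)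
      (mul_nonneg (sqrt_nonneg _) (ww_nonneg _ _))).trans ?_
    have i2 : √(qq ℓ) * qq ℓ ^ (-γ) ≤ N ^ (-γ) * (qq ℓ * σ ℓ) := by
      rw [hσ, if_neg hℓ]
      have j1 : qq ℓ ^ (-(γ/2)) ≤ N ^ (-γ) := by
        have : N ^ (-γ) = (N^2) ^ (-(γ/2)) := by
          rw [← rpow_natCast, ← rpow_mul hN.le]
          congr 1
          push_cast
          ring
        rw [this]
        exact rpow_le_rpow_of_nonpos (by positivity) hq'.le (by linarith)
      have j2 : √(qq ℓ) * qq ℓ ^ (-γ) = qq ℓ ^ (-(γ/2)) * (qq ℓ * qq ℓ ^ (-((1 + γ) / 2))) := by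
        rw [sqrt_eq_rpow]
        nth_rewrite 4 [← rpow_one (qq ℓ)]
        rw [← rpow_add hq0, ← rpow_add hq0, ← rpow_add hq0]
        congr 1
        ring
      rw [j2]
      gcongr
    have i3 : 0 ≤ (2*π)^2 * (8 * (√A * √B)) * ww v ℓ := by
      have := ww_nonneg v ℓ
      positivity
    calc _ = ((2*π)^2 * (8 * (√A * √B)) * ww v ℓ) * (√(qq ℓ) * qq ℓ ^ (-γ)) := by ring
      _ ≤ ((2*π)^2 * (8 * (√A * √B)) * ww v ℓ) * (N ^ (-γ) * (qq ℓ * σ ℓ)) := by gcongr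
      _ = _ := by ring
  · rw [tsum_mul_left, hlap]
    have k1 : 8 * √B * √(latS α) ≤ N ^ γ := by
      have : N ^ γ = √(N ^ (2 - α)) := by
        rw [sqrt_eq_rpow, ← rpow_mul hN.le, hγ]
        congr 1
        ring
      rw [this]
      refine le_sqrt_of_sq_le ?_
      rw [mul_pow, mul_pow, sq_sqrt hB0, sq_sqrt (latS_nonneg α)]
      rw [← hB] at hNB
      linarith
    have k2 : N ^ (-γ) * N ^ γ = 1 := by rw [← rpow_add hN]; simp
    have k3 : N ^ (-γ) * (8 * √B * √(latS α)) ≤ 1 := by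
      rw [← k2]
      gcongr
    calc _ ≤ (2*π)^2 * (8 * (√A * √B) * N ^ (-γ)) * (√A * √(latS α)) := by gcongr
      _ = (2*π)^2 * (√A * √A) * (N ^ (-γ) * (8 * √B * √(latS α))) := by ring
      _ ≤ (2*π)^2 * (√A * √A) * 1 := by gcongr
      _ = (2*π)^2 * A := by rw [mul_self_sqrt hA0, mul_one]

end

/-! ### Time-dependent smooth fields -/

/-- Fields that are jointly smooth in `(t, x)` and periodic in `x`. -/
structure SmT (F : ℝ → ℝ × ℝ → ℝ) : Prop where
  smooth : ContDiff ℝ ∞ (fun p : ℝ × (ℝ × ℝ) => F p.1 p.2)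
  per1 : ∀ t, ∀ x : ℝ × ℝ, F t (x.1 + 2*π, x.2) = F t x
  per2 : ∀ t, ∀ x : ℝ × ℝ, F t (x.1, x.2 + 2*π) = F t x

namespace SmT
variable {F G : ℝ → ℝ × ℝ → ℝ}

lemma slice (hF : SmT F) (t : ℝ) : Sm (F t) where
  smooth := hF.smooth.comp (contDiff_const.prodMk contDiff_id)
  per1 := hF.per1 t
  per2 := hF.per2 t

lemma diff (hF : SmT F) : Differentiable ℝ (fun p : ℝ × (ℝ × ℝ) => F p.1 p.2) :=
  hF.smooth.differentiable (by simp)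

lemma cont (hF : SmT F) : Continuous (fun p : ℝ × (ℝ × ℝ) => F p.1 p.2) := hF.smooth.continuous

lemma pd1_eq (hF : SmT F) (p : ℝ × (ℝ × ℝ)) :
    pd1 (F p.1) p.2 = fderiv ℝ (fun p : ℝ × (ℝ × ℝ) => F p.1 p.2) p (0, (1, 0)) := by
  have h1 : HasDerivAt (fun s : ℝ => (p.1, (s, p.2.2))) ((0:ℝ), ((1:ℝ), (0:ℝ))) p.2.1 :=
    (hasDerivAt_const p.2.1 p.1).prodMk ((hasDerivAt_id p.2.1).prodMk (hasDerivAt_const _ p.2.2))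
  exact ((hF.diff (p.1, (p.2.1, p.2.2))).hasFDerivAt.comp_hasDerivAt p.2.1 h1).deriv

lemma pd2_eq (hF : SmT F) (p : ℝ × (ℝ × ℝ)) :
    pd2 (F p.1) p.2 = fderiv ℝ (fun p : ℝ × (ℝ × ℝ) => F p.1 p.2) p (0, (0, 1)) := by
  have h1 : HasDerivAt (fun s : ℝ => (p.1, (p.2.1, s))) ((0:ℝ), ((0:ℝ), (1:ℝ))) p.2.2 :=
    (hasDerivAt_const p.2.2 p.1).prodMk ((hasDerivAt_const _ p.2.1).prodMk (hasDerivAt_id p.2.2))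
  exact ((hF.diff (p.1, (p.2.1, p.2.2))).hasFDerivAt.comp_hasDerivAt p.2.2 h1).deriv

lemma pd1 (hF : SmT F) : SmT (fun t => pd1 (F t)) where
  smooth := by
    rw [funext hF.pd1_eq]
    exact (hF.smooth.fderiv_right (m := ∞) (by simp)).clm_apply contDiff_const
  per1 t := (hF.slice t).pd1.per1
  per2 t := (hF.slice t).pd1.per2

lemma pd2 (hF : SmT F) : SmT (fun t => pd2 (F t)) where
  smooth := by
    rw [funext hF.pd2_eq]
    exact (hF.smooth.fderiv_right (m := ∞) (by simp)).clm_apply contDiff_const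
  per1 t := (hF.slice t).pd2.per1
  per2 t := (hF.slice t).pd2.per2

lemma add (hF : SmT F) (hG : SmT G) : SmT (fun t x => F t x + G t x) where
  smooth := hF.smooth.add hG.smooth
  per1 t := ((hF.slice t).add (hG.slice t)).per1
  per2 t := ((hF.slice t).add (hG.slice t)).per2

lemma lap (hF : SmT F) : SmT (fun t => lap (F t)) := hF.pd1.pd1.add hF.pd2.pd2

lemma hasDerivAt (hF : SmT F) (t : ℝ) (x : ℝ × ℝ) :
    HasDerivAt (fun s => F s x) (deriv (fun s => F s x) t) t := by
  apply DifferentiableAt.hasDerivAt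
  exact DifferentiableAt.comp (f := fun s => (s, x)) t (hF.diff (t, x)) (by fun_prop)

lemma continuous_deriv (hF : SmT F) :
    Continuous (fun p : ℝ × (ℝ × ℝ) => deriv (fun s => F s p.2) p.1) := by
  have e : ∀ p : ℝ × (ℝ × ℝ), deriv (fun s => F s p.2) p.1 =
      fderiv ℝ (fun p : ℝ × (ℝ × ℝ) => F p.1 p.2) p (1, 0) := by
    intro p
    have h1 : HasDerivAt (fun s : ℝ => (s, p.2)) ((1:ℝ), (0:ℝ × ℝ)) p.1 :=
      (hasDerivAt_id p.1).prodMk (hasDerivAt_const _ p.2)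
    exact ((hF.diff (p.1, p.2)).hasFDerivAt.comp_hasDerivAt p.1 h1).deriv
  rw [funext e]
  exact (hF.smooth.continuous_fderiv (by simp)).clm_apply continuous_const

lemma continuous_fc (hF : SmT F) (ℓ : ℤ × ℤ) : Continuous fun t => fc (F t) ℓ := by
  unfold fc
  have h : Continuous fun t => ∫ x in Omega2, (F t x : ℂ) *
      Complex.exp (-(Complex.I) * ((ℓ.1:ℂ) * (x.1:ℂ) + (ℓ.2:ℂ) * (x.2:ℂ))) := by
    refine continuous_parametric_integral_of_continuous ?_ isCompact_Omega2
    exact Continuous.mul (Complex.continuous_ofReal.comp hF.cont) (by fun_prop)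
  exact h.const_smul (((2*π)^2)⁻¹ : ℝ)

/-- The Fourier coefficients are summable uniformly for `t` in a compact interval. -/
lemma exists_decay (hF : SmT F) (T : ℝ) : ∃ M, ∀ t ∈ Icc (0:ℝ) T, ∀ ℓ, ‖fc (F t) ℓ‖ ≤
    M * ((if ℓ = 0 then 1 else 0) + (if ℓ = 0 then 0 else qq ℓ ^ (-2:ℝ))) := by
  have hK : IsCompact (Icc (0:ℝ) T ×ˢ Omega2) := isCompact_Icc.prod isCompact_Omega2
  obtain ⟨M, hM⟩ := hK.exists_bound_of_continuousOn hF.cont.continuousOn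
  obtain ⟨M', hM'⟩ := hK.exists_bound_of_continuousOn hF.lap.lap.cont.continuousOn
  exact ⟨max M M', fun t ht => norm_fc_le_decay (hF.slice t)
    (fun x hx => (hM (t, x) ⟨ht, hx⟩).trans (le_max_left _ _))
    (fun x hx => (hM' (t, x) ⟨ht, hx⟩).trans (le_max_right _ _))⟩

/-- Differentiation under the integral sign. -/
lemma hasDerivAt_integral_sq (hF : SmT F) (t : ℝ) :
    HasDerivAt (fun s => ∫ x in Omega2, F s x ^ 2)
      (∫ x in Omega2, 2 * F t x * deriv (fun s => F s x) t) t := by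
  have hK : IsCompact (Icc (t - 1) (t + 1) ×ˢ Omega2) := isCompact_Icc.prod isCompact_Omega2
  have hc : Continuous fun p : ℝ × (ℝ × ℝ) => 2 * F p.1 p.2 * deriv (fun s => F s p.2) p.1 :=
    (continuous_const.mul hF.cont).mul hF.continuous_deriv
  obtain ⟨M, hM⟩ := hK.exists_bound_of_continuousOn hc.continuousOn
  have hcs : ∀ s, Continuous fun x => F s x ^ 2 := fun s => (hF.slice s).cont.pow 2
  refine (hasDerivAt_integral_of_dominated_loc_of_deriv_le (bound := fun _ => M)
    (F := fun s x => F s x ^ 2) (F' := fun s x => 2 * F s x * deriv (fun s => F s x) s)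
    (s := Icc (t - 1) (t + 1))
    (Icc_mem_nhds (by linarith) (by linarith))
    (Filter.Eventually.of_forall fun s => (hcs s).aestronglyMeasurable)
    (integrableOn_Omega2 (hcs t)) ?_ ?_ (integrableOn_Omega2 continuous_const) ?_).2
  · have : Continuous fun x => 2 * F t x * deriv (fun s => F s x) t :=
      hc.comp (continuous_const.prodMk continuous_id)
    exact this.aestronglyMeasurable
  · refine (ae_restrict_iff' measurableSet_Omega2).mpr (Filter.Eventually.of_forall ?_)
    exact fun x hx s hs => hM (s, x) ⟨hs, hx⟩
  · refine Filter.Eventually.of_forall fun x s _ => ?_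
    exact ((hF.hasDerivAt s x).pow 2).congr_deriv (by simp)

end SmT

/-! ### Energy estimate on a time slice -/

lemma integral_sum_d_eq_zero {F₁ F₁' F₂ F₂' : ℝ × ℝ → ℝ}
    (hd1 : ∀ x : ℝ × ℝ, HasDerivAt (fun s => F₁ (s, x.2)) (F₁' x) x.1)
    (hd2 : ∀ x : ℝ × ℝ, HasDerivAt (fun s => F₂ (x.1, s)) (F₂' x) x.2)
    (hc1 : Continuous F₁') (hc2 : Continuous F₂')
    (hp1 : ∀ x : ℝ × ℝ, F₁ (x.1 + 2*π, x.2) = F₁ x)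
    (hp2 : ∀ x : ℝ × ℝ, F₂ (x.1, x.2 + 2*π) = F₂ x) :
    ∫ x in Omega2, (F₁' x + F₂' x) = 0 := by
  rw [integral_add (integrableOn_Omega2 hc1) (integrableOn_Omega2 hc2),
    integral_d1_eq_zero hd1 hc1 hp1, integral_d2_eq_zero hd2 hc2 hp2, add_zero]

/-- `2f (v·∇)f = v·∇(f²)`, so integration by parts moves the derivative onto `v`. -/
lemma integral_adv {v : ℝ × ℝ → ℝ × ℝ} (hv : SmV v) {f : ℝ × ℝ → ℝ} (hf : Sm f) :
    ∫ x in Omega2, (2 * f x * adv v f x + divg v x * f x ^ 2) = 0 := by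
  have hc := hf.cont
  have h1 := hf.pd1.cont
  have h2 := hf.pd2.cont
  have hc1 := hv.c1.cont
  have hc2 := hv.c2.cont
  have hd1 := hv.c1.pd1.cont
  have hd2 := hv.c2.pd2.cont
  rw [← integral_sum_d_eq_zero (F₁ := fun x => (v x).1 * f x ^ 2) (F₂ := fun x => (v x).2 * f x ^ 2)
    (F₁' := fun x => pd1 (fun y => (v y).1) x * f x ^ 2 + (v x).1 * (2 * f x * pd1 f x))
    (F₂' := fun x => pd2 (fun y => (v y).2) x * f x ^ 2 + (v x).2 * (2 * f x * pd2 f x))]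
  · congr 1
    ext x
    simp only [adv, divg]
    ring
  · intro x
    exact ((hasDerivAt_pd1 hv.c1.diff x).mul ((hasDerivAt_pd1 hf.diff x).pow 2)).congr_deriv (by simp)
  · intro x
    exact ((hasDerivAt_pd2 hv.c2.diff x).mul ((hasDerivAt_pd2 hf.diff x).pow 2)).congr_deriv (by simp)
  · fun_prop
  · fun_prop
  · intro x
    have := hv.c1.per1 x
    simp only [hf.per1 x, this]
  · intro x
    have := hv.c2.per2 x
    simp only [hf.per2 x, this]

/-- Self-adjointness of the Laplacian on periodic fields. -/
lemma integral_mul_lap {f g : ℝ × ℝ → ℝ} (hf : Sm f) (hg : Sm g) :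
    ∫ x in Omega2, (f x * lap g x - g x * lap f x) = 0 := by
  have c1 := hf.cont
  have c2 := hg.cont
  have c3 := hf.pd1.pd1.cont
  have c4 := hf.pd2.pd2.cont
  have c5 := hg.pd1.pd1.cont
  have c6 := hg.pd2.pd2.cont
  rw [← integral_sum_d_eq_zero (F₁ := fun x => f x * pd1 g x - g x * pd1 f x)
    (F₂ := fun x => f x * pd2 g x - g x * pd2 f x)
    (F₁' := fun x => f x * pd1 (pd1 g) x - g x * pd1 (pd1 f) x)
    (F₂' := fun x => f x * pd2 (pd2 g) x - g x * pd2 (pd2 f) x)]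
  · congr 1
    ext x
    simp only [lap]
    ring
  · intro x
    have h := ((hasDerivAt_pd1 hf.diff x).mul (hasDerivAt_pd1 hg.pd1.diff x)).sub
      ((hasDerivAt_pd1 hg.diff x).mul (hasDerivAt_pd1 hf.pd1.diff x))
    refine h.congr_deriv ?_
    simp only [Prod.mk.eta]
    ring
  · intro x
    have h := ((hasDerivAt_pd2 hf.diff x).mul (hasDerivAt_pd2 hg.pd2.diff x)).sub
      ((hasDerivAt_pd2 hg.diff x).mul (hasDerivAt_pd2 hf.pd2.diff x))
    refine h.congr_deriv ?_
    simp only [Prod.mk.eta]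
    ring
  · fun_prop
  · fun_prop
  · intro x
    simp only [hf.per1 x, hg.per1 x, hf.pd1.per1 x, hg.pd1.per1 x]
  · intro x
    simp only [hf.per2 x, hg.per2 x, hf.pd2.per2 x, hg.pd2.per2 x]

/-- Energy balance for one component `f` of the velocity. The destabilising term is absorbed by
completing the square, `-2λ f Δf ≤ λ² f² + (Δf)²`. -/
lemma energy_component {v : ℝ × ℝ → ℝ × ℝ} (hv : SmV v) {f : ℝ × ℝ → ℝ} (hf : Sm f) (lam : ℝ)
    {D : ℝ × ℝ → ℝ} (hD : ∀ x, D x + adv v f x = -(lap (lap f) x) - lam * lap f x) :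
    ∫ x in Omega2, 2 * f x * D x ≤
      ∫ x in Omega2, (lam ^ 2 * f x ^ 2 + divg v x * f x ^ 2 - lap f x ^ 2) := by
  have c := hf.cont
  have c1 := hf.pd1.cont
  have c2 := hf.pd2.cont
  have cl := hf.lap.cont
  have cll := hf.lap.lap.cont
  have cv1 := hv.c1.cont
  have cv2 := hv.c2.cont
  have cd := hv.divg.cont
  have ca : Continuous (adv v f) := by
    unfold adv
    fun_prop
  have hD' : D = fun x => -adv v f x - lap (lap f) x - lam * lap f x := by
    ext x
    linarith [hD x]
  have iG : IntegrableOn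
      (fun x => lam ^ 2 * f x ^ 2 + divg v x * f x ^ 2 - lap f x ^ 2) Omega2 :=
    integrableOn_Omega2 (by fun_prop)
  have iP : IntegrableOn (fun x => 2 * f x * adv v f x + divg v x * f x ^ 2) Omega2 :=
    integrableOn_Omega2 (by fun_prop)
  have iQ : IntegrableOn (fun x => 2 * (f x * lap (lap f) x - lap f x * lap f x)) Omega2 :=
    integrableOn_Omega2 (by fun_prop)
  have hGP : IntegrableOn (fun x => (lam ^ 2 * f x ^ 2 + divg v x * f x ^ 2 - lap f x ^ 2) -
      (2 * f x * adv v f x + divg v x * f x ^ 2)) Omega2 := iG.sub iP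
  have e : ∫ x in Omega2, (lam ^ 2 * f x ^ 2 + divg v x * f x ^ 2 - lap f x ^ 2) =
      ∫ x in Omega2, ((lam ^ 2 * f x ^ 2 + divg v x * f x ^ 2 - lap f x ^ 2) -
        (2 * f x * adv v f x + divg v x * f x ^ 2) -
        2 * (f x * lap (lap f) x - lap f x * lap f x)) := by
    rw [MeasureTheory.integral_sub (f := fun x => (lam ^ 2 * f x ^ 2 + divg v x * f x ^ 2 - lap f x ^ 2) -
        (2 * f x * adv v f x + divg v x * f x ^ 2)) hGP iQ,
      MeasureTheory.integral_sub iG iP,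
      integral_adv hv hf, MeasureTheory.integral_const_mul, integral_mul_lap hf hf.lap]
    ring
  rw [e]
  refine setIntegral_mono (integrableOn_Omega2 ?_) ((iG.sub iP).sub iQ) (fun x => ?_)
  · rw [hD']
    fun_prop
  · simp only [hD']
    nlinarith [sq_nonneg (lap f x + lam * f x)]

/-- Energy balance on a time slice where `D` is the time derivative of the velocity. -/
lemma energy_slice {v : ℝ × ℝ → ℝ × ℝ} (hv : SmV v) (lam : ℝ) {D₁ D₂ : ℝ × ℝ → ℝ}
    (hD1 : ∀ x, D₁ x + adv v (fun y => (v y).1) x =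
      -(lap (lap (fun y => (v y).1)) x) - lam * lap (fun y => (v y).1) x)
    (hD2 : ∀ x, D₂ x + adv v (fun y => (v y).2) x =
      -(lap (lap (fun y => (v y).2)) x) - lam * lap (fun y => (v y).2) x) :
    (∫ x in Omega2, 2 * (v x).1 * D₁ x) + ∫ x in Omega2, 2 * (v x).2 * D₂ x ≤
      lam ^ 2 * l2sq v + (∫ x in Omega2, divg v x * ((v x).1 ^ 2 + (v x).2 ^ 2)) - l2sqLap v := by
  have c1 := hv.c1.cont
  have c2 := hv.c2.cont
  have l1 := hv.c1.lap.cont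
  have l2 := hv.c2.lap.cont
  have cd := hv.divg.cont
  refine (add_le_add (energy_component hv hv.c1 lam hD1) (energy_component hv hv.c2 lam hD2)).trans
    (le_of_eq ?_)
  unfold l2sq l2sqLap
  rw [← MeasureTheory.integral_const_mul, ← MeasureTheory.integral_add,
    ← MeasureTheory.integral_add, ← MeasureTheory.integral_sub]
  · congr 1
    ext x
    ring
  all_goals exact integrableOn_Omega2 (by fun_prop)

/-! ### The growth rate `sup_Ω (P_N δ)₊` -/

/-- The quantity `sup_{x ∈ Ω} max(P_N f(x), 0)`. -/
def supPos (N : ℝ) (f : ℝ × ℝ → ℝ) : ℝ := sSup ((fun x => max (PN N f x) 0) '' Omega2)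

lemma zero_mem_Omega2 : (0 : ℝ × ℝ) ∈ Omega2 :=
  ⟨⟨le_rfl, two_pi_nonneg⟩, ⟨le_rfl, two_pi_nonneg⟩⟩

lemma max_PN_le (N : ℝ) {f : ℝ × ℝ → ℝ} (hf : Sm f) (x : ℝ × ℝ) :
    max (PN N f x) 0 ≤ ∑' ℓ, ‖fc f ℓ‖ :=
  max_le ((le_abs_self _).trans (abs_PN_le N hf x)) (tsum_nonneg fun _ => norm_nonneg _)

lemma bddAbove_PN (N : ℝ) {f : ℝ × ℝ → ℝ} (hf : Sm f) :
    BddAbove ((fun x => max (PN N f x) 0) '' Omega2) := by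
  refine ⟨∑' ℓ, ‖fc f ℓ‖, ?_⟩
  rintro _ ⟨x, -, rfl⟩
  exact max_PN_le N hf x

lemma PN_le_supPos (N : ℝ) {f : ℝ × ℝ → ℝ} (hf : Sm f) {x : ℝ × ℝ} (hx : x ∈ Omega2) :
    PN N f x ≤ supPos N f :=
  (le_max_left _ _).trans (le_csSup (bddAbove_PN N hf) (mem_image_of_mem _ hx))

lemma supPos_nonneg (N : ℝ) {f : ℝ × ℝ → ℝ} (hf : Sm f) : 0 ≤ supPos N f :=
  (le_max_right _ _).trans (le_csSup (bddAbove_PN N hf) (mem_image_of_mem _ zero_mem_Omega2))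

lemma supPos_le (N : ℝ) {f : ℝ × ℝ → ℝ} (hf : Sm f) : supPos N f ≤ ∑' ℓ, ‖fc f ℓ‖ := by
  refine csSup_le (Nonempty.image _ ⟨0, zero_mem_Omega2⟩) ?_
  rintro _ ⟨x, -, rfl⟩
  exact max_PN_le N hf x

/-- By continuity the supremum may be taken over a countable dense subset of `Ω`. -/
lemma supPos_eq_iSup [Nonempty Omega2] (N : ℝ) {f : ℝ × ℝ → ℝ} (hf : Sm f) :
    supPos N f = ⨆ n : ℕ, max (PN N f (TopologicalSpace.denseSeq Omega2 n)) 0 := by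
  have hb : BddAbove (range fun n : ℕ => max (PN N f (TopologicalSpace.denseSeq Omega2 n)) 0) := by
    refine ⟨∑' ℓ, ‖fc f ℓ‖, ?_⟩
    rintro _ ⟨n, rfl⟩
    exact max_PN_le N hf _
  apply le_antisymm
  · refine csSup_le (Nonempty.image _ ⟨0, zero_mem_Omega2⟩) ?_
    rintro _ ⟨x, hx, rfl⟩
    have hc := continuous_PN N hf
    refine (TopologicalSpace.denseRange_denseSeq Omega2).induction_on
      (p := fun y : Omega2 => max (PN N f y) 0 ≤
        ⨆ n : ℕ, max (PN N f (TopologicalSpace.denseSeq Omega2 n)) 0) ⟨x, hx⟩ ?_ ?_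
    · exact isClosed_le (by fun_prop) continuous_const
    · exact fun n => le_ciSup hb n
  · exact ciSup_le fun n => le_csSup (bddAbove_PN N hf) (mem_image_of_mem _ (Subtype.coe_prop _))

lemma measurable_supPos {F : ℝ → ℝ × ℝ → ℝ} (hF : SmT F) {N : ℝ → ℝ} (hN : Measurable N) :
    Measurable fun t => supPos (N t) (F t) := by
  have : Nonempty Omega2 := ⟨⟨0, zero_mem_Omega2⟩⟩
  simp only [fun t => supPos_eq_iSup (N t) (hF.slice t)]
  refine Measurable.iSup fun n => Measurable.max ?_ measurable_const
  simp only [PN_eq]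
  refine Measurable.tsum fun ℓ => Measurable.ite ?_ ?_ measurable_const
  · exact measurableSet_le measurable_const (hN.pow_const 2)
  · exact (Complex.continuous_re.comp ((hF.continuous_fc ℓ).mul continuous_const)).measurable

lemma integrableOn_supPos {F : ℝ → ℝ × ℝ → ℝ} (hF : SmT F) {N : ℝ → ℝ} (hN : Measurable N)
    (T : ℝ) : IntegrableOn (fun t => supPos (N t) (F t)) (Icc 0 T) := by
  obtain ⟨M, hM⟩ := hF.exists_decay T
  refine Measure.integrableOn_of_bounded (M := ∑' ℓ : ℤ × ℤ,
    M * ((if ℓ = 0 then 1 else 0) + (if ℓ = 0 then 0 else qq ℓ ^ (-2:ℝ))))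
    (by simp) (measurable_supPos hF hN).aestronglyMeasurable ?_
  refine (ae_restrict_iff' measurableSet_Icc).mpr (Filter.Eventually.of_forall fun t ht => ?_)
  rw [Real.norm_of_nonneg (supPos_nonneg _ (hF.slice t))]
  exact (supPos_le _ (hF.slice t)).trans
    ((summable_norm_fc (hF.slice t)).tsum_le_tsum (hM t ht) (summable_decay M))

lemma measurable_hnormSq {u : ℝ → ℝ × ℝ → ℝ × ℝ} (h1 : SmT fun t y => (u t y).1)
    (h2 : SmT fun t y => (u t y).2) (κ : ℝ) : Measurable fun t => hnormSq (u t) κ := by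
  unfold hnormSq
  refine Measurable.const_mul (Measurable.tsum fun ℓ => ?_) _
  split_ifs
  · exact measurable_const
  · unfold coefAbsSq
    have := h1.continuous_fc ℓ
    have := h2.continuous_fc ℓ
    refine Continuous.measurable ?_
    fun_prop

/-! ### The differential inequality and Grönwall's lemma -/

lemma l2sq_nonneg (v : ℝ × ℝ → ℝ × ℝ) : 0 ≤ l2sq v :=
  integral_nonneg fun _ => by positivity

lemma integral_PN_le {v : ℝ × ℝ → ℝ × ℝ} (hv : SmV v) (N : ℝ) :
    ∫ x in Omega2, PN N (divg v) x * ((v x).1 ^ 2 + (v x).2 ^ 2) ≤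
      supPos N (divg v) * l2sq v := by
  have c1 := hv.c1.cont
  have c2 := hv.c2.cont
  have c3 := continuous_PN N hv.divg
  unfold l2sq
  rw [← MeasureTheory.integral_const_mul]
  refine setIntegral_mono_on (integrableOn_Omega2 (by fun_prop)) (integrableOn_Omega2 (by fun_prop))
    measurableSet_Omega2 fun x hx => ?_
  gcongr
  exact PN_le_supPos N hv.divg hx

/-- The low modes of the divergence contribute at most their supremum, the high modes at most
`‖Δv‖²`. -/
lemma integral_divg_le {v : ℝ × ℝ → ℝ × ℝ} (hv : SmV v) {α : ℝ} (h0 : 0 ≤ α) (h2 : α < 2)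
    (hz : ww v 0 = 0) {N : ℝ} (hN : 0 < N) (hNB : 64 * latS α *
      (∑' ℓ, if ℓ = 0 then 0 else qq ℓ ^ (-α) * ww v ℓ ^ 2) ≤ N ^ (2 - α)) :
    ∫ x in Omega2, divg v x * ((v x).1 ^ 2 + (v x).2 ^ 2) ≤
      supPos N (divg v) * l2sq v + l2sqLap v := by
  have c1 := hv.c1.cont
  have c2 := hv.c2.cont
  have c3 := continuous_PN N hv.divg
  have c4 := hv.divg.cont
  have e : ∫ x in Omega2, divg v x * ((v x).1 ^ 2 + (v x).2 ^ 2) =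
      (∫ x in Omega2, PN N (divg v) x * ((v x).1 ^ 2 + (v x).2 ^ 2)) +
      ∫ x in Omega2, (divg v x - PN N (divg v) x) * ((v x).1 ^ 2 + (v x).2 ^ 2) := by
    rw [← MeasureTheory.integral_add (integrableOn_Omega2 (by fun_prop))
      (integrableOn_Omega2 (by fun_prop))]
    congr 1
    ext x
    ring
  rw [e]
  exact add_le_add (integral_PN_le hv N) (high_freq hv h0 h2 hz hN hNB)

/-- Mean-free fields have vanishing zeroth Fourier mode. -/
lemma ww_zero {v : ℝ × ℝ → ℝ × ℝ} (hv : SmV v) (h : ∫ x in Omega2, v x = 0) : ww v 0 = 0 := by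
  have hi : IntegrableOn v Omega2 :=
    integrableOn_Omega2 (hv.c1.cont.prodMk hv.c2.cont)
  have i1 : ∫ x in Omega2, (v x).1 = 0 := by
    have := (ContinuousLinearMap.fst ℝ ℝ ℝ).integral_comp_comm hi
    rw [h] at this
    simpa using this
  have i2 : ∫ x in Omega2, (v x).2 = 0 := by
    have := (ContinuousLinearMap.snd ℝ ℝ ℝ).integral_comp_comm hi
    rw [h] at this
    simpa using this
  have f0 : ∀ f : ℝ × ℝ → ℝ, ∫ x in Omega2, f x = 0 → fc f 0 = 0 := by
    intro f hf
    have : ∫ x in Omega2, (f x : ℂ) = 0 := by rw [integral_complex_ofReal, hf]; simp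
    simp [fc, this]
  simp [ww, coefAbsSq, f0 _ i1, f0 _ i2]

/-- Grönwall's inequality with an integrable rate; passing through `log (E + ε)` avoids any
continuity requirement on `h`. -/
lemma gronwall_integrable {E E' h : ℝ → ℝ} {t : ℝ} (ht : 0 ≤ t) (hE0 : ∀ s, 0 ≤ E s)
    (hE : ∀ s, HasDerivAt E (E' s) s) (hh0 : ∀ s ∈ Ioo 0 t, 0 ≤ h s)
    (hh : IntegrableOn h (Icc 0 t)) (hle : ∀ s ∈ Ioo 0 t, E' s ≤ h s * E s) :
    E t ≤ exp (∫ s in (0:ℝ)..t, h s) * E 0 := by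
  have key : ∀ ε > 0, E t + ε ≤ exp (∫ s in (0:ℝ)..t, h s) * (E 0 + ε) := by
    intro ε hε
    have hp : ∀ s, 0 < E s + ε := fun s => by linarith [hE0 s]
    have hd : ∀ s, HasDerivAt (fun s => log (E s + ε)) (E' s / (E s + ε)) s :=
      fun s => ((hE s).add_const ε).log (hp s).ne'
    have := sub_le_integral_of_hasDeriv_right_of_le ht
      (fun s _ => (hd s).continuousAt.continuousWithinAt)
      (fun s _ => (hd s).hasDerivWithinAt) hh (fun s hs => by
        rw [div_le_iff₀ (hp s)]
        nlinarith [hle s hs, mul_nonneg (hh0 s hs) hε.le])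
    rw [← exp_log (hp t), ← exp_log (hp 0), ← exp_add]
    exact exp_le_exp.mpr (by linarith)
  have hlim : Filter.Tendsto (fun ε : ℝ => exp (∫ s in (0:ℝ)..t, h s) * (E 0 + ε))
      (nhdsWithin 0 (Ioi 0)) (nhds (exp (∫ s in (0:ℝ)..t, h s) * (E 0 + 0))) :=
    (Continuous.tendsto (by fun_prop) 0).mono_left nhdsWithin_le_nhds
  rw [add_zero] at hlim
  refine ge_of_tendsto hlim ?_
  filter_upwards [self_mem_nhdsWithin] with ε hε
  have hε' : 0 < ε := hε
  linarith [key ε hε']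

/-- Low-mode divergence Grönwall estimate for the 2D KSE: for each
`α ∈ [0,2)` there is a universal `C* > 0` such that for any `N*` with `C*·N* ≥ 1`, any
`λ > 0` and any smooth 2π-periodic mean-free solution,
`‖u(t)‖²_{L²} ≤ exp(λ²t + ∫₀ᵗ sup_Ω (P_{N_α(s)}δ)₊ ds)·‖u(0)‖²_{L²}`, where
`N_α(t) = (C*(‖u(t)‖²_{Ḣ^{−α}} + N*))^{1/(2−α)}`. -/
theorem stmt11 :
    ∀ α : ℝ, α ∈ Set.Ico (0:ℝ) 2 →
      ∃ Cstar : ℝ, 0 < Cstar ∧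
        ∀ Nstar : ℝ, 0 < Nstar → 1 ≤ Cstar * Nstar →
          ∀ lam T : ℝ, 0 < lam → 0 ≤ T →
            ∀ u : ℝ → ℝ × ℝ → ℝ × ℝ, SmoothTS u → (∀ t, Periodic2 (u t)) →
              IsKSE lam T u →
              (∀ t ∈ Set.Icc (0:ℝ) T, (∫ x in Omega2, u t x) = 0) →
              ∀ t ∈ Set.Icc (0:ℝ) T,
                l2sq (u t)
                  ≤ Real.exp (lam^2 * t +
                      ∫ s in (0:ℝ)..t,
                        sSup ((fun x =>
                          max (PN ((Cstar * (hnormSq (u s) (-α) + Nstar)) ^ ((2 - α)⁻¹))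
                                (divg (u s)) x) 0) '' Omega2))
                    * l2sq (u 0) := by
  rintro α ⟨h0, h2⟩
  have hL := latS_nonneg α
  -- `64 * latS α` is what `high_freq` requires; adding `1` keeps the constant positive
  -- without a lower bound on the lattice sum.
  refine ⟨64 * latS α + 1, by linarith, ?_⟩
  intro Nstar hNs _ lam T _ _ u hsm hper hkse hmean t ht
  have hsm' : ContDiff ℝ ∞ (fun p : ℝ × (ℝ × ℝ) => u p.1 p.2) := contDiff_infty.mpr hsm
  have hu1 : SmT fun s y => (u s y).1 :=
    ⟨hsm'.fst, fun s x => congrArg Prod.fst (hper s x).1, fun s x => congrArg Prod.fst (hper s x).2⟩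
  have hu2 : SmT fun s y => (u s y).2 :=
    ⟨hsm'.snd, fun s x => congrArg Prod.snd (hper s x).1, fun s x => congrArg Prod.snd (hper s x).2⟩
  have hv : ∀ s, SmV (u s) := fun s => ⟨hu1.slice s, hu2.slice s⟩
  have hdiv : SmT fun s => divg (u s) := hu1.pd1.add hu2.pd2
  obtain ⟨N, hN⟩ : ∃ N : ℝ → ℝ, ∀ s,
      N s = ((64 * latS α + 1) * (hnormSq (u s) (-α) + Nstar)) ^ ((2 - α)⁻¹) := ⟨_, fun _ => rfl⟩
  have hNm : Measurable N := by
    rw [funext hN]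
    exact (((measurable_hnormSq hu1 hu2 (-α)).add_const _).const_mul _).pow_const _
  simp only [← hN]
  change l2sq (u t) ≤ exp (lam^2 * t + ∫ s in (0:ℝ)..t, supPos (N s) (divg (u s))) * l2sq (u 0)
  have hint := integrableOn_supPos hdiv hNm t
  have hd : ∀ s, HasDerivAt (fun s => l2sq (u s))
      ((∫ x in Omega2, 2 * (u s x).1 * deriv (fun s => (u s x).1) s) +
        ∫ x in Omega2, 2 * (u s x).2 * deriv (fun s => (u s x).2) s) s := by
    intro s
    have e : (fun s => l2sq (u s)) =
        fun s => (∫ x in Omega2, (u s x).1 ^ 2) + ∫ x in Omega2, (u s x).2 ^ 2 := by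
      ext s
      exact MeasureTheory.integral_add (integrableOn_Omega2 ((hv s).c1.cont.pow 2))
        (integrableOn_Omega2 ((hv s).c2.cont.pow 2))
    rw [e]
    exact (hu1.hasDerivAt_integral_sq s).add (hu2.hasDerivAt_integral_sq s)
  have hg := gronwall_integrable (h := fun s => lam^2 + supPos (N s) (divg (u s))) ht.1
    (fun s => l2sq_nonneg (u s)) hd
    (fun s _ => add_nonneg (sq_nonneg _) (supPos_nonneg _ (hv s).divg))
    ((continuous_const.integrableOn_Icc).add hint) (fun s hs => ?_)
  · rw [intervalIntegral.integral_add (by simp)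
      ((intervalIntegrable_iff_integrableOn_Icc_of_le ht.1).mpr hint)] at hg
    simpa [mul_comm] using hg
  have hsT : s ∈ Icc (0:ℝ) T := ⟨hs.1.le, hs.2.le.trans ht.2⟩
  obtain ⟨B, hB⟩ : ∃ B, B = ∑' ℓ, if ℓ = 0 then 0 else qq ℓ ^ (-α) * ww (u s) ℓ ^ 2 := ⟨_, rfl⟩
  have hB0 : 0 ≤ B := by
    rw [hB]
    refine tsum_nonneg (fun ℓ => ?_)
    split_ifs
    · exact le_rfl
    · exact mul_nonneg (rpow_nonneg (qq_nonneg ℓ) _) (sq_nonneg _)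
  have hH : hnormSq (u s) (-α) = (2*π)^2 * B := by
    rw [hB]
    simp only [ww_sq]
    rfl
  -- `high_freq` is phrased with the bare series, which is smaller than the norm as `(2π)² ≥ 1`.
  have hBH : B ≤ hnormSq (u s) (-α) := by
    rw [hH]
    exact le_mul_of_one_le_left hB0 (by nlinarith [Real.pi_gt_three])
  have hpos : 0 < (64 * latS α + 1) * (hnormSq (u s) (-α) + Nstar) :=
    mul_pos (by linarith) (by linarith)
  have hNB : 64 * latS α *
      (∑' ℓ, if ℓ = 0 then 0 else qq ℓ ^ (-α) * ww (u s) ℓ ^ 2) ≤ N s ^ (2 - α) := by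
    rw [hN, rpow_inv_rpow hpos.le (by linarith), ← hB]
    nlinarith [mul_nonneg hL hNs.le, mul_le_mul_of_nonneg_left hBH hL]
  have hNpos : 0 < N s := by
    rw [hN]
    exact rpow_pos_of_pos hpos _
  have hA := energy_slice (hv s) lam (fun x => (hkse s hsT x).1) (fun x => (hkse s hsT x).2)
  have hC := integral_divg_le (hv s) h0 h2 (ww_zero (hv s) (hmean s hsT)) hNpos hNB
  refine hA.trans ?_
  change _ ≤ (lam^2 + supPos (N s) (divg (u s))) * l2sq (u s)
  rw [add_mul]
  unfold supPos at *
  linarith
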